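/- arXiv:0912.0405 — 2 statements merged into one kernel-verified Lean document; each statement's English description precedes it below -/
import Mathlib

section
/- Let s = (β_1,…,β_n) ∈ B_m^n be a braid system whose Hurwitz orbit s·B_n is finite, and let j be an integer with 2 ≤ j ≤ n. If the partial Coxeter element C = β_1β_2⋯β_j is periodic (some positive power of C is central in B_m), then s·(c_1c_2⋯c_{j-1})^r = s for some integer r with 1 ≤ r ≤ m!. -/
open FreeGroup in
/-- The braid relations on `m` strands (generators indexed 0-based by `Fin (m-1)`). -/
def braidRels (m : ℕ) : Set (FreeGroup (Fin (m - 1))) :=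
  {r | ∃ i j : Fin (m - 1), (i.val + 2 ≤ j.val ∨ j.val + 2 ≤ i.val) ∧
        r = of i * of j * (of j * of i)⁻¹} ∪
  {r | ∃ i j : Fin (m - 1), (i.val + 1 = j.val ∨ j.val + 1 = i.val) ∧
        r = of i * of j * of i * (of j * of i * of j)⁻¹}

/-- The braid group on `m` strands. -/
abbrev BraidGroup (m : ℕ) := PresentedGroup (braidRels m)

/-- The Artin generator `σ_i` (1-based index `1 ≤ i ≤ m-1`); junk value `1` out of range. -/
def braidGen (m : ℕ) (i : ℕ) : BraidGroup m :=
  if h : 1 ≤ i ∧ i ≤ m - 1 then PresentedGroup.of ⟨i - 1, by omega⟩ else 1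

/-- A braid is periodic if some positive power of it is central. -/
def IsPeriodic {m : ℕ} (β : BraidGroup m) : Prop :=
  ∃ k : ℕ, 1 ≤ k ∧ β ^ k ∈ Subgroup.center (BraidGroup m)

/-- The elementary Hurwitz move at (0-based) position `i`, as a bijection on `n`-tuples. -/
def hEquiv {G : Type*} [Group G] {n : ℕ} (i : Fin (n - 1)) : Equiv.Perm (Fin n → G) where
  toFun s := fun k =>
    if k.val = i.val then s ⟨i.val + 1, by have := i.isLt; omega⟩
    else if k.val = i.val + 1 then
      (s ⟨i.val + 1, by have := i.isLt; omega⟩)⁻¹ * s ⟨i.val, by have := i.isLt; omega⟩ *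
        s ⟨i.val + 1, by have := i.isLt; omega⟩
    else s k
  invFun t := fun k =>
    if k.val = i.val then
      t ⟨i.val, by have := i.isLt; omega⟩ * t ⟨i.val + 1, by have := i.isLt; omega⟩ *
        (t ⟨i.val, by have := i.isLt; omega⟩)⁻¹
    else if k.val = i.val + 1 then t ⟨i.val, by have := i.isLt; omega⟩
    else t k
  left_inv s := by
    funext k
    have hlt := i.isLt
    rcases k with ⟨kv, hkv⟩
    by_cases h1 : kv = i.val
    · subst h1
      simp [mul_assoc]
    · by_cases h2 : kv = i.val + 1
      · subst h2
        simp
      · simp [h1, h2]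
  right_inv t := by
    funext k
    have hlt := i.isLt
    rcases k with ⟨kv, hkv⟩
    by_cases h1 : kv = i.val
    · subst h1
      simp [mul_assoc]
    · by_cases h2 : kv = i.val + 1
      · subst h2
        simp [mul_assoc]
      · simp [h1, h2]

/-- The (right) Hurwitz action of a word in the generators `σ_1, …, σ_{n-1}` of `B_n`
on `n`-tuples of elements of a group `G`: `hurwitzAct (w₁ * w₂) s = hurwitzAct w₂ (hurwitzAct w₁ s)`. -/
def hurwitzAct {G : Type*} [Group G] {n : ℕ} (w : FreeGroup (Fin (n - 1))) (s : Fin n → G) :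
    Fin n → G :=
  (MulOpposite.unop (FreeGroup.lift (fun i => MulOpposite.op (hEquiv (G := G) (n := n) i)) w)) s

/-- The Hurwitz orbit of a braid system. -/
def hurwitzOrbit {G : Type*} [Group G] {n : ℕ} (s : Fin n → G) : Set (Fin n → G) :=
  {t | ∃ w : FreeGroup (Fin (n - 1)), hurwitzAct w s = t}

/-- The generator `σ_i` (1-based) as a word acting on length-`n` systems. -/
def genWord (n : ℕ) (i : ℕ) : FreeGroup (Fin (n - 1)) :=
  if h : 1 ≤ i ∧ i ≤ n - 1 then FreeGroup.of ⟨i - 1, by omega⟩ else 1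

/-- The pure braid word `c_i = (σ_1⁻¹ ⋯ σ_{i-1}⁻¹) σ_i² (σ_{i-1} ⋯ σ_1)`. -/
def cWord (n : ℕ) (i : ℕ) : FreeGroup (Fin (n - 1)) :=
  ((List.range (i - 1)).map (fun t => (genWord n (t + 1))⁻¹)).prod *
    genWord n i ^ 2 *
    ((List.range (i - 1)).reverse.map (fun t => genWord n (t + 1))).prod

/-- The word `Δ_{(i,j)} = (σ_i σ_{i+1} ⋯ σ_j)(σ_i ⋯ σ_{j-1}) ⋯ (σ_i σ_{i+1})(σ_i)`. -/
def deltaWord (n i j : ℕ) : FreeGroup (Fin (n - 1)) :=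
  ((List.range (j - i + 1)).map (fun t =>
    ((List.range (j - t - i + 1)).map (fun u => genWord n (i + u))).prod)).prod

/-- The exponent-sum homomorphism, valued in `Multiplicative ℤ`. -/
def expSumHom {m : ℕ} : BraidGroup m →* Multiplicative ℤ :=
  PresentedGroup.toGroup (f := fun _ => Multiplicative.ofAdd 1) (by
    rintro r (⟨i, j, -, rfl⟩ | ⟨i, j, -, rfl⟩) <;>
      simp <;> group)

/-- The exponent sum of a braid: `e(σ_i) = 1`. -/
def esum {m : ℕ} (β : BraidGroup m) : ℤ := Multiplicative.toAdd (expSumHom β)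

/-- A braid system is reducible if some non-trivial partition of the index set has all
entries from the two parts commuting. -/
def IsReducible {G : Type*} [Group G] {n : ℕ} (s : Fin n → G) : Prop :=
  ∃ I : Set (Fin n), I.Nonempty ∧ Iᶜ.Nonempty ∧ ∀ i ∈ I, ∀ j ∈ Iᶜ, Commute (s i) (s j)

/-!
Put `l = j - 1`, `C = β_1 ⋯ β_j` and `D = β_2 ⋯ β_j`. Since `c_1 ⋯ c_l` equals
`(σ_1 ⋯ σ_l)(σ_l ⋯ σ_1)`, its `r`-th power conjugates `β_1` by `C ^ r`, conjugates `β_2, …, β_j`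
by `D ^ (-r) * C ^ r` and fixes the other entries. As the orbit is finite and `C` is periodic,
some power of `D` commutes with `β_2, …, β_j`. So `r = m!` works once we know that in `B_m`, if a
positive power of `x` commutes with `y`, then `x ^ m!` does.

The braid `x ^ m!` is pure, so this follows from uniqueness of roots in the pure braid group, which
is proved by induction on the number of strands. Forgetting one strand embeds the pure braids into
`F ⋊ B_{m-1}`, where `F` is free and `B_{m-1}` acts by the Artin action. Pure braids act trivially
on `F^ab`, hence on every quotient `I ^ k / I ^ (k + 1)` for the augmentation ideal `I` of `ℚ[F]`.
If two elements with the same image in `B_{m-1}` have equal `N`-th powers and their `F`-components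
`f`, `g` satisfy `f - g ∈ I ^ k`, then `N (f - g) ∈ I ^ (k + 1)`. So `f - g` lies in every `I ^ k`,
and `f = g` because `F` embeds by ping-pong into a group of transvections congruent to `1`
modulo `X`, under which `I ^ k` maps into multiples of `X ^ k`.
-/

section AugmentationIdeal

open MonoidAlgebra
open scoped commutatorElement

variable (R : Type*) [CommRing R] (F : Type*) [Group F]

/-- The augmentation ideal of `R[F]`: the kernel of the map to `R` sending each `f : F` to `1`. -/
noncomputable abbrev augIdeal : Ideal (MonoidAlgebra R F) :=
  RingHom.ker (MonoidAlgebra.lift R R F 1)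

variable {R F}

theorem of_sub_one_mem_augIdeal (f : F) : of R F f - 1 ∈ augIdeal R F := by
  simp [RingHom.mem_ker]

theorem mul_mem_augIdeal_pow {i j k : ℕ} (h : k ≤ i + j) {a b : MonoidAlgebra R F}
    (ha : a ∈ augIdeal R F ^ i) (hb : b ∈ augIdeal R F ^ j) : a * b ∈ augIdeal R F ^ k :=
  Ideal.pow_le_pow_right h <| by
    rw [Ideal.IsTwoSided.pow_add]
    exact Ideal.mul_mem_mul ha hb

theorem augIdeal_pow_induction {motive : ℕ → MonoidAlgebra R F → Prop}
    (zero : ∀ a, motive 0 a) (add : ∀ k a b, motive k a → motive k b → motive k (a + b))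
    (mul : ∀ k, ∀ a ∈ augIdeal R F, ∀ b ∈ augIdeal R F ^ k, motive k b → motive (k + 1) (a * b))
    {k : ℕ} {a : MonoidAlgebra R F} (ha : a ∈ augIdeal R F ^ k) : motive k a := by
  induction k generalizing a with
  | zero => exact zero a
  | succ k ih =>
    rw [Ideal.IsTwoSided.pow_succ] at ha
    exact Submodule.smul_induction_on ha (fun a ha b hb => mul k a ha b hb (ih hb))
      (fun a b => add (k + 1) a b)

theorem dvd_map_of_mem_augIdeal {A : Type*} [Ring A] [Algebra R A]
    (ρ : MonoidAlgebra R F →ₐ[R] A) {z : A}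
    (hρ : ∀ f, z ∣ ρ (of R F f) - 1) {a : MonoidAlgebra R F} (ha : a ∈ augIdeal R F) :
    z ∣ ρ a := by
  suffices h : ∀ a, z ∣ ρ a - algebraMap R A (MonoidAlgebra.lift R R F 1 a) by
    simpa [RingHom.mem_ker.1 ha] using h a
  intro a
  induction a using MonoidAlgebra.induction_on with
  | of f => simpa using hρ f
  | add a b ha hb => simpa only [map_add, add_sub_add_comm] using dvd_add ha hb
  | smul r a ha =>
    rw [map_smul, map_smul, smul_eq_mul, map_mul, ← Algebra.smul_def, ← smul_sub]
    exact dvd_smul_of_dvd r ha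

theorem pow_dvd_map_of_mem_augIdeal_pow {A : Type*} [Ring A] [Algebra R A]
    (ρ : MonoidAlgebra R F →ₐ[R] A) {z : A} (hz : ∀ a, Commute z a)
    (hρ : ∀ f, z ∣ ρ (of R F f) - 1) {k : ℕ} {a : MonoidAlgebra R F}
    (ha : a ∈ augIdeal R F ^ k) : z ^ k ∣ ρ a := by
  refine augIdeal_pow_induction (motive := fun k a => z ^ k ∣ ρ a) ?zero ?add ?mul ha
  case zero => simp
  case add => exact fun k a b ha hb => by simpa only [map_add] using dvd_add ha hb
  case mul =>
    intro k a ha b _ hb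
    obtain ⟨c, hc⟩ := dvd_map_of_mem_augIdeal ρ hρ ha
    obtain ⟨d, hd⟩ := hb
    refine ⟨c * d, ?_⟩
    rw [map_mul, hc, hd, pow_succ', mul_assoc, mul_assoc, ((hz c).pow_left k).symm.left_comm]

theorem of_sub_one_mem_augIdeal_sq_of_mem_commutator {f : F} (hf : f ∈ commutator F) :
    of R F f - 1 ∈ augIdeal R F ^ 2 := by
  rw [commutator_eq_closure] at hf
  induction hf using Subgroup.closure_induction with
  | mem _ h =>
    obtain ⟨x, y, rfl⟩ := h
    have key : of R F ⁅x, y⁆ - 1 = ((of R F x - 1) * (of R F y - 1) -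
        (of R F y - 1) * (of R F x - 1)) * of R F (x⁻¹ * y⁻¹) := by
      have h : of R F ⁅x, y⁆ - 1 = (of R F (x * y) - of R F (y * x)) * of R F (x⁻¹ * y⁻¹) := by
        rw [sub_mul, ← map_mul, ← map_mul, ← map_one (of R F), commutatorElement_def]
        congr 2 <;> group
      rw [h, map_mul, map_mul]
      noncomm_ring
    rw [key]
    have h1 (z : F) : of R F z - 1 ∈ augIdeal R F ^ 1 := by
      rw [Submodule.pow_one]; exact of_sub_one_mem_augIdeal z
    exact Ideal.mul_mem_right _ _ (sub_mem (mul_mem_augIdeal_pow le_rfl (h1 x) (h1 y))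
      (mul_mem_augIdeal_pow le_rfl (h1 y) (h1 x)))
  | one => rw [map_one, sub_self]; exact zero_mem _
  | mul x y _ _ hx hy =>
    have : of R F (x * y) - 1 = of R F x * (of R F y - 1) + (of R F x - 1) := by
      rw [map_mul]; noncomm_ring
    exact this ▸ add_mem (Ideal.mul_mem_left _ _ hy) hx
  | inv x _ hx =>
    have : of R F x⁻¹ - 1 = -(of R F x⁻¹ * (of R F x - 1)) := by
      rw [mul_sub, ← map_mul, inv_mul_cancel, map_one, mul_one, neg_sub]
    exact this ▸ neg_mem (Ideal.mul_mem_left _ _ hx)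

theorem mapDomain_sub_mem_augIdeal_sq {φ : F →* F}
    (hφ : Abelianization.map φ = MonoidHom.id (Abelianization F)) (a : MonoidAlgebra R F) :
    mapDomainRingHom R φ a - a ∈ augIdeal R F ^ 2 := by
  induction a using MonoidAlgebra.induction_on with
  | of f =>
    have hmem : f⁻¹ * φ f ∈ commutator F := by
      rw [← QuotientGroup.eq]
      exact (DFunLike.congr_fun hφ (Abelianization.of f)).symm
    have : mapDomainRingHom R φ (of R F f) - of R F f = of R F f * (of R F (f⁻¹ * φ f) - 1) := by
      rw [mul_sub, ← map_mul, mul_inv_cancel_left, mul_one]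
      simp
    exact this ▸ Ideal.mul_mem_left _ _ (of_sub_one_mem_augIdeal_sq_of_mem_commutator hmem)
  | add a b ha hb => simpa only [map_add, add_sub_add_comm] using add_mem ha hb
  | smul r a ha =>
    have : mapDomainRingHom R φ (r • a) = r • mapDomainRingHom R φ a :=
      map_smul (mapDomainAlgHom R R φ) r a
    rw [this, ← smul_sub, Algebra.smul_def]
    exact Ideal.mul_mem_left _ _ ha

theorem mapDomain_sub_mem_augIdeal_pow {φ : F →* F}
    (hφ : Abelianization.map φ = MonoidHom.id (Abelianization F)) {k : ℕ}
    {a : MonoidAlgebra R F} (ha : a ∈ augIdeal R F ^ k) :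
    mapDomainRingHom R φ a - a ∈ augIdeal R F ^ (k + 1) := by
  refine augIdeal_pow_induction
    (motive := fun k a => mapDomainRingHom R φ a - a ∈ augIdeal R F ^ (k + 1)) ?zero ?add ?mul ha
  case zero => exact fun a => Ideal.pow_le_pow_right one_le_two (mapDomain_sub_mem_augIdeal_sq hφ a)
  case add =>
    exact fun k a b ha hb => by simpa only [map_add, add_sub_add_comm] using add_mem ha hb
  case mul =>
    intro k a ha b hb ih
    have hb' : mapDomainRingHom R φ b ∈ augIdeal R F ^ k := by
      simpa using add_mem (Ideal.pow_le_pow_right k.le_succ ih) hb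
    have : mapDomainRingHom R φ (a * b) - a * b = (mapDomainRingHom R φ a - a) *
        mapDomainRingHom R φ b + a * (mapDomainRingHom R φ b - b) := by
      rw [map_mul]; noncomm_ring
    rw [this]
    exact add_mem (mul_mem_augIdeal_pow (by omega) (mapDomain_sub_mem_augIdeal_sq hφ a) hb')
      (mul_mem_augIdeal_pow (i := 1) (by omega) (by rwa [Submodule.pow_one]) ih)

section SemidirectProduct

variable {G : Type*} [Group G] {θ : G →* MulAut F} {γ δ : F ⋊[θ] G}

theorem of_pow_left_sub_of_pow_left_sub_nsmul_mem_augIdeal_pow (hright : γ.right = δ.right)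
    (htriv : Abelianization.map (θ γ.right).toMonoidHom = MonoidHom.id (Abelianization F))
    {k : ℕ} (hk : of R F γ.left - of R F δ.left ∈ augIdeal R F ^ k) (n : ℕ) :
    of R F (γ ^ n).left - of R F (δ ^ n).left - n • (of R F γ.left - of R F δ.left) ∈
      augIdeal R F ^ (k + 1) := by
  induction n with
  | zero => simp
  | succ n ih =>
    set φ := mapDomainRingHom R (θ γ.right).toMonoidHom
    have hφ (f : F) : of R F (θ γ.right f) = φ (of R F f) := by simp [φ]
    have hsub : of R F (γ ^ n).left - of R F (δ ^ n).left ∈ augIdeal R F ^ k :=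
      (Submodule.sub_mem_iff_left _ (nsmul_mem hk n)).1 (Ideal.pow_le_pow_right k.le_succ ih)
    have expand : of R F (γ ^ (n + 1)).left - of R F (δ ^ (n + 1)).left -
          (n + 1) • (of R F γ.left - of R F δ.left) =
        (of R F γ.left - of R F δ.left) * (of R F (θ γ.right (γ ^ n).left) - 1) +
        (of R F δ.left - 1) * φ (of R F (γ ^ n).left - of R F (δ ^ n).left) +
        (φ (of R F (γ ^ n).left - of R F (δ ^ n).left) -
          (of R F (γ ^ n).left - of R F (δ ^ n).left)) +
        (of R F (γ ^ n).left - of R F (δ ^ n).left - n • (of R F γ.left - of R F δ.left)) := by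
      rw [pow_succ', pow_succ', SemidirectProduct.mul_left, SemidirectProduct.mul_left, ← hright,
        map_mul, map_mul, hφ, hφ, map_sub, succ_nsmul]
      noncomm_ring
    have hone (f : F) : of R F f - 1 ∈ augIdeal R F ^ 1 := by
      rw [Submodule.pow_one]; exact of_sub_one_mem_augIdeal f
    have hφsub := mapDomain_sub_mem_augIdeal_pow htriv hsub
    rw [expand]
    refine add_mem (add_mem (add_mem ?_ ?_) hφsub) ih
    · exact mul_mem_augIdeal_pow le_rfl hk (hone _)
    · refine mul_mem_augIdeal_pow (Nat.add_comm k 1).le (hone _) ?_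
      exact (Submodule.sub_mem_iff_left _ hsub).1 (Ideal.pow_le_pow_right k.le_succ hφsub)

theorem eq_of_pow_eq_of_abelianization_map_eq_id {K : Type*} [Field K] [CharZero K]
    (hsep : ∀ f g : F, (∀ k, of K F f - of K F g ∈ augIdeal K F ^ k) → f = g)
    (htriv : Abelianization.map (θ γ.right).toMonoidHom = MonoidHom.id (Abelianization F))
    (hright : γ.right = δ.right) {n : ℕ} (hn : n ≠ 0) (hpow : γ ^ n = δ ^ n) : γ = δ := by
  refine SemidirectProduct.ext (hsep _ _ fun k => ?_) hright
  induction k with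
  | zero => simp [Submodule.pow_zero]
  | succ k ih =>
    have h := of_pow_left_sub_of_pow_left_sub_nsmul_mem_augIdeal_pow hright htriv ih n
    rw [hpow, sub_self, zero_sub, neg_mem_iff, ← Nat.cast_smul_eq_nsmul K] at h
    exact (((augIdeal K F ^ (k + 1)).restrictScalars K).smul_mem_iff (Nat.cast_ne_zero.2 hn)).1 h

end SemidirectProduct

end AugmentationIdeal

section FreeGroupSeparation

open Polynomial

section Shear

variable {R : Type*} [CommRing R] {c d : R} {e : R} {u : R[X] × R[X]}

/-- The linear form on `R[X]²` whose kernel is the line spanned by `(1, c)`. -/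
noncomputable def lineForm (c : R) : Module.Dual R[X] (R[X] × R[X]) :=
  LinearMap.snd _ _ _ - C c • LinearMap.fst _ _ _

theorem lineForm_apply (c : R) (u : R[X] × R[X]) : lineForm c u = u.2 - C c * u.1 := rfl

theorem lineForm_smul_line (c : R) (p : R[X]) : lineForm c (p • (1, C c)) = 0 := by
  simp [lineForm_apply, mul_comm]

/-- The transvection of `R[X]²` fixing the line spanned by `(1, c)`, with parameter `e X`. It is
congruent to `1` modulo `X`, which makes the representation `X`-adically continuous. -/
noncomputable def shear (c e : R) : (R[X] × R[X]) ≃ₗ[R[X]] (R[X] × R[X]) :=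
  LinearEquiv.transvection (lineForm_smul_line c (C e * X))

theorem shear_apply (c e : R) (u : R[X] × R[X]) :
    shear c e u = u + lineForm c u • (C e * X) • (1, C c) := rfl

theorem lineForm_shear (c e : R) (u : R[X] × R[X]) : lineForm c (shear c e u) = lineForm c u := by
  rw [shear_apply, map_add, map_smul, lineForm_smul_line, smul_zero, add_zero]

theorem shear_mul_shear (c a b : R) : shear c a * shear c b = shear c (a + b) :=
  LinearEquiv.ext fun u => by
    rw [LinearEquiv.mul_apply, shear_apply c a, lineForm_shear, shear_apply, shear_apply, add_assoc,
      ← smul_add, ← add_smul, ← add_mul, ← C_add, add_comm b]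

theorem shear_one_zpow (c : R) (n : ℤ) : shear c 1 ^ n = shear c n := by
  induction n with
  | zero => ext <;> simp [shear_apply]
  | succ n ih => rw [zpow_add_one, ih, shear_mul_shear]; simp
  | pred n ih =>
    rw [zpow_sub_one, ih, mul_inv_eq_iff_eq_mul, shear_mul_shear]; simp

/-- The ping-pong set of vectors of `R[X]²` close to the line spanned by `(1, c)`. -/
def nearLine (c : R) : Set (R[X] × R[X]) :=
  {u | u.1 ≠ 0 ∧ (lineForm c u).degree < u.1.degree}

theorem degree_lineForm_of_mem_nearLine [NoZeroDivisors R] (hcd : c ≠ d) (hu : u ∈ nearLine d) :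
    (lineForm c u).degree = u.1.degree := by
  have hdeg : (C (d - c) * u.1).degree = u.1.degree := by
    rw [degree_mul, degree_C (sub_ne_zero.2 hcd.symm), zero_add]
  have hsum : lineForm c u = C (d - c) * u.1 + lineForm d u := by
    simp only [lineForm_apply, C_sub]; ring
  rw [hsum, degree_add_eq_left_of_degree_lt (hdeg.symm ▸ hu.2), hdeg]

theorem shear_mem_nearLine [IsDomain R] (hcd : c ≠ d) (he : e ≠ 0)
    (hu : u ∈ nearLine d) : shear c e u ∈ nearLine c := by
  have hline := degree_lineForm_of_mem_nearLine hcd hu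
  have hstep : (lineForm c u * (C e * X)).degree = u.1.degree + 1 := by
    rw [degree_mul, degree_mul, degree_X, hline, degree_C he, zero_add]
  have hlt : u.1.degree < u.1.degree + 1 := by
    rw [degree_eq_natDegree hu.1]; exact_mod_cast Nat.lt_succ_self _
  have hfst : (shear c e u).1.degree = u.1.degree + 1 := by
    have : (shear c e u).1 = u.1 + lineForm c u * (C e * X) := by simp [shear_apply]
    rw [this, degree_add_eq_right_of_degree_lt (hstep.symm ▸ hlt), hstep]
  refine ⟨fun h0 => ?_, by rwa [lineForm_shear, hfst, hline]⟩
  rw [← hfst, h0, degree_zero] at hlt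
  exact not_lt_bot hlt

theorem disjoint_nearLine [NoZeroDivisors R] (hcd : c ≠ d) :
    Disjoint (nearLine c) (nearLine d) :=
  Set.disjoint_left.2 fun _ hc hd => hc.2.ne (degree_lineForm_of_mem_nearLine hcd hd)

variable (R) in
/-- The representation of the free group on the set `R` by transvections of `R[X]²`. -/
noncomputable def shearRep : FreeGroup R →* (R[X] × R[X]) ≃ₗ[R[X]] (R[X] × R[X]) :=
  FreeGroup.lift fun c => shear c 1

open Monoid Pointwise in
theorem shearRep_injective [IsDomain R] [CharZero R] : Function.Injective (shearRep R) := by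
  have hlift : shearRep R = (CoprodI.lift fun c : R => FreeGroup.lift fun _ : Unit =>
      shear c 1).comp freeGroupEquivCoprodI.toMonoidHom :=
    FreeGroup.ext_hom _ _ fun c => by simp [shearRep]
  rw [hlift, MonoidHom.coe_comp]
  refine Function.Injective.comp ?_ freeGroupEquivCoprodI.injective
  have hcard : 3 ≤ Cardinal.mk (FreeGroup Unit) := by
    rw [FreeGroup.freeGroupUnitEquivInt.cardinal_eq, Cardinal.mk_denumerable]
    exact (Cardinal.natCast_lt_aleph0 (n := 3)).le
  refine CoprodI.lift_injective_of_ping_pong _ (Or.inr ⟨0, hcard⟩) nearLine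
    (fun c => ⟨(1, C c), by simp [nearLine, lineForm_apply]⟩)
    (fun c d hcd => disjoint_nearLine hcd) ?_
  intro c d hcd h hh
  obtain ⟨n, rfl⟩ := FreeGroup.freeGroupUnitEquivInt.symm.surjective h
  have hn : n ≠ 0 := by rintro rfl; simp [FreeGroup.freeGroupUnitEquivInt] at hh
  have happly : FreeGroup.lift (fun _ : Unit => shear c 1)
      (FreeGroup.freeGroupUnitEquivInt.symm n) = shear c n := by
    simp [FreeGroup.freeGroupUnitEquivInt, shear_one_zpow]
  rintro _ ⟨u, hu, rfl⟩
  rw [happly]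
  exact shear_mem_nearLine hcd (Int.cast_ne_zero.2 hn) hu

theorem X_dvd_shear_sub_one (c e : R) :
    algebraMap R[X] (Module.End R[X] (R[X] × R[X])) X ∣ (shear c e).toLinearMap - 1 :=
  ⟨(lineForm c).smulRight (C e • (1, C c)), LinearMap.ext fun u => by
    change u + lineForm c u • (C e * X) • (1, C c) - u =
      (X : R[X]) • lineForm c u • C e • ((1 : R[X]), C c)
    rw [add_sub_cancel_left, mul_comm (C e), mul_smul, smul_comm]⟩

theorem X_dvd_shearRep_sub_one (f : FreeGroup R) :
    algebraMap R[X] (Module.End R[X] (R[X] × R[X])) X ∣ (shearRep R f).toLinearMap - 1 := by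
  induction f using FreeGroup.induction_on with
  | C1 => simp [Module.End.one_eq_id]
  | of c => simpa [shearRep] using X_dvd_shear_sub_one c 1
  | inv_of c _ =>
    have : shearRep R (FreeGroup.of c)⁻¹ = shear c (-1) := by
      rw [map_inv, shearRep, FreeGroup.lift_apply_of, ← zpow_neg_one, shear_one_zpow]
      simp
    exact this ▸ X_dvd_shear_sub_one c (-1)
  | mul f g hf hg =>
    have : (shearRep R (f * g)).toLinearMap - 1 =
        ((shearRep R f).toLinearMap - 1) * (shearRep R g).toLinearMap +
          ((shearRep R g).toLinearMap - 1) := by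
      rw [map_mul, LinearEquiv.coe_toLinearMap_mul, sub_one_mul, sub_add_sub_cancel]
    exact this ▸ dvd_add (hf.mul_right _) hg

theorem eq_zero_of_forall_X_pow_dvd
    {T : Module.End R[X] (R[X] × R[X])} (hT : ∀ k, algebraMap R[X] _ X ^ k ∣ T) : T = 0 := by
  have hzero (p : R[X]) (hp : ∀ k, X ^ k ∣ p) : p = 0 :=
    Polynomial.ext fun n => X_pow_dvd_iff.1 (hp (n + 1)) n n.lt_succ_self
  have hdvd (u : R[X] × R[X]) (k : ℕ) : ∃ v, T u = (X ^ k : R[X]) • v := by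
    obtain ⟨S, hS⟩ := hT k
    exact ⟨S u, by rw [hS, ← map_pow]; rfl⟩
  refine LinearMap.ext fun u => Prod.ext (hzero _ fun k => ?_) (hzero _ fun k => ?_) <;>
  · obtain ⟨v, hv⟩ := hdvd u k
    simp [hv]

end Shear

open MonoidAlgebra

theorem eq_of_forall_of_sub_of_mem_augIdeal_pow_of_injective {ι R S : Type*} [CommRing R]
    [CommRing S] [Algebra R S] [IsDomain S] [CharZero S] {c : ι → S} (hc : Function.Injective c)
    {f g : FreeGroup ι} (h : ∀ k, of R _ f - of R _ g ∈ augIdeal R (FreeGroup ι) ^ k) : f = g := by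
  let ρ : MonoidAlgebra R (FreeGroup ι) →ₐ[R] Module.End S[X] (S[X] × S[X]) :=
    MonoidAlgebra.lift R _ _ (LinearEquiv.automorphismGroup.toLinearMapMonoidHom.comp
      ((shearRep S).comp (FreeGroup.map c)))
  have hρ (f : FreeGroup ι) : ρ (of R _ f) = (shearRep S (FreeGroup.map c f)).toLinearMap :=
    MonoidAlgebra.lift_of _ _
  have hzero : ρ (of R _ f - of R _ g) = 0 := eq_zero_of_forall_X_pow_dvd fun k =>
    pow_dvd_map_of_mem_augIdeal_pow ρ (Algebra.commutes X)
      (fun f => hρ f ▸ X_dvd_shearRep_sub_one _) (h k)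
  rw [map_sub, hρ, hρ, sub_eq_zero, LinearEquiv.toLinearMap_inj] at hzero
  exact FreeGroup.map_injective hc (shearRep_injective hzero)

theorem eq_of_forall_of_sub_of_mem_augIdeal_pow {ι R : Type*} [CommRing R] [IsDomain R] [CharZero R]
    (f g : FreeGroup ι) (h : ∀ k, of R _ f - of R _ g ∈ augIdeal R (FreeGroup ι) ^ k) : f = g :=
  eq_of_forall_of_sub_of_mem_augIdeal_pow_of_injective (S := MvPolynomial ι R)
    MvPolynomial.X_injective h

end FreeGroupSeparation

namespace BraidGroup

section Generators

variable {m : ℕ}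

/-- The Artin generators indexed from `0`, so that `sigma m i` exchanges the strands `i` and
`i + 1`; it is `1` for `i ≥ m - 1`. -/
def sigma (m i : ℕ) : BraidGroup m := braidGen m (i + 1)

theorem sigma_of_lt {i : ℕ} (h : i < m - 1) : sigma m i = PresentedGroup.of ⟨i, h⟩ :=
  dif_pos ⟨by omega, by omega⟩

theorem sigma_of_le {i : ℕ} (h : m - 1 ≤ i) : sigma m i = 1 :=
  dif_neg (by omega)

theorem commute_sigma (m : ℕ) {i j : ℕ} (h : i + 2 ≤ j) : Commute (sigma m i) (sigma m j) := by
  by_cases hj : j < m - 1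
  · have hi : i < m - 1 := by omega
    rw [sigma_of_lt hi, sigma_of_lt hj, commute_iff_eq, ← mul_inv_eq_one]
    exact PresentedGroup.one_of_mem (Or.inl ⟨⟨i, hi⟩, ⟨j, hj⟩, Or.inl h, rfl⟩)
  · rw [sigma_of_le (not_lt.mp hj)]
    exact Commute.one_right _

theorem sigma_braid {i : ℕ} (h : i + 1 < m - 1) :
    sigma m i * sigma m (i + 1) * sigma m i =
      sigma m (i + 1) * sigma m i * sigma m (i + 1) := by
  have hi : i < m - 1 := by omega
  rw [sigma_of_lt hi, sigma_of_lt h, ← mul_inv_eq_one]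
  exact PresentedGroup.one_of_mem (Or.inr ⟨⟨i, hi⟩, ⟨i + 1, h⟩, Or.inl rfl, rfl⟩)

/-- The homomorphism out of the braid group determined by a sequence satisfying the braid
relations. -/
def lift {G : Type*} [Group G] (m : ℕ) (f : ℕ → G)
    (hcomm : ∀ i j, i + 2 ≤ j → j < m - 1 → Commute (f i) (f j))
    (hbraid : ∀ i, i + 1 < m - 1 → f i * f (i + 1) * f i = f (i + 1) * f i * f (i + 1)) :
    BraidGroup m →* G :=
  PresentedGroup.toGroup (f := fun i : Fin (m - 1) => f i) <| by
    rintro r (⟨i, j, h, rfl⟩ | ⟨i, j, h, rfl⟩) <;>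
      simp only [map_mul, map_inv, FreeGroup.lift_apply_of, mul_inv_eq_one]
    · rcases h with h | h
      · exact hcomm i j h j.isLt
      · exact (hcomm j i h i.isLt).symm
    · rcases h with h | h
      · simpa only [h] using hbraid i (h ▸ j.isLt)
      · simpa only [h] using (hbraid j (h ▸ i.isLt)).symm

theorem lift_sigma {G : Type*} [Group G] {f : ℕ → G}
    {hcomm : ∀ i j, i + 2 ≤ j → j < m - 1 → Commute (f i) (f j)}
    {hbraid : ∀ i, i + 1 < m - 1 → f i * f (i + 1) * f i = f (i + 1) * f i * f (i + 1)}
    {i : ℕ} (hi : i < m - 1) : lift m f hcomm hbraid (sigma m i) = f i := by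
  rw [sigma_of_lt hi, lift, PresentedGroup.toGroup.of]

theorem induction_on {p : BraidGroup m → Prop} (x : BraidGroup m) (one : p 1)
    (sigma : ∀ i, i < m - 1 → p (sigma m i)) (mul : ∀ a b, p a → p b → p (a * b))
    (inv : ∀ a, p a → p a⁻¹) : p x := by
  have hx : x ∈ Subgroup.closure (Set.range (PresentedGroup.of : _ → BraidGroup m)) := by
    rw [PresentedGroup.closure_range_of]
    exact Subgroup.mem_top x
  induction hx using Subgroup.closure_induction with
  | mem y hy =>
    obtain ⟨i, rfl⟩ := hy
    exact sigma_of_lt i.isLt ▸ sigma i i.isLt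
  | one => exact one
  | mul a b _ _ ha hb => exact mul a b ha hb
  | inv a _ ha => exact inv a ha

theorem eq_one_of_le_one (hm : m ≤ 1) (x : BraidGroup m) : x = 1 := by
  induction x using induction_on with
  | one => rfl
  | sigma i hi => omega
  | mul a b ha hb => rw [ha, hb, one_mul]
  | inv a ha => rw [ha, inv_one]

end Generators

section Permutation

variable {m : ℕ}

/-- The permutation of the strands underlying a braid, extended by the identity to all of `ℕ` so
that braids on different numbers of strands can be compared. -/
def toPerm (m : ℕ) : BraidGroup m →* Equiv.Perm ℕ :=
  lift m (fun i => Equiv.swap i (i + 1))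
    (fun i j h _ => Equiv.ext fun k => by
      simp only [Equiv.Perm.mul_apply, Equiv.swap_apply_def]
      split_ifs <;> omega)
    (fun i _ => Equiv.ext fun k => by
      simp only [Equiv.Perm.mul_apply, Equiv.swap_apply_def]
      split_ifs <;> omega)

theorem toPerm_sigma {i : ℕ} (hi : i < m - 1) : toPerm m (sigma m i) = Equiv.swap i (i + 1) :=
  lift_sigma hi

theorem toPerm_apply_of_le (x : BraidGroup m) {k : ℕ} (hk : m ≤ k) : toPerm m x k = k := by
  induction x using induction_on with
  | one => rw [map_one, Equiv.Perm.one_apply]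
  | sigma i hi => rw [toPerm_sigma hi, Equiv.swap_apply_of_ne_of_ne (by omega) (by omega)]
  | mul a b ha hb => rw [map_mul, Equiv.Perm.mul_apply, hb, ha]
  | inv a ha => rw [map_inv, Equiv.Perm.inv_eq_iff_eq, ha]

theorem toPerm_apply_lt_iff (x : BraidGroup m) {k : ℕ} : toPerm m x k < m ↔ k < m := by
  rw [← not_le, ← not_le, not_iff_not]
  refine ⟨fun h => ?_, fun h => (toPerm_apply_of_le x h).symm ▸ h⟩
  rwa [← (toPerm m x).injective (toPerm_apply_of_le x h)]

theorem toPerm_pow_factorial (x : BraidGroup m) : toPerm m (x ^ m.factorial) = 1 := by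
  let p : Equiv.Perm {k // k < m} := (toPerm m x).subtypePerm fun _ => toPerm_apply_lt_iff x
  have hp : Equiv.Perm.ofSubtype p = toPerm m x :=
    Equiv.Perm.ofSubtype_subtypePerm _ fun k hk =>
      not_le.mp fun hmk => hk (toPerm_apply_of_le x hmk)
  have hcard : Nat.card (Equiv.Perm {k // k < m}) = m.factorial := by
    rw [Nat.card_congr Fin.equivSubtype.symm.permCongr, Nat.card_perm, Nat.card_fin]
  rw [map_pow, ← hp, ← map_pow, ← hcard, pow_card_eq_one', map_one]

end Permutation

section ArtinAction

open FreeGroup (of)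

variable {m : ℕ}

/-- The action of `σ_i` on the free group, `x_i ↦ x_i⁻¹ x_{i+1} x_i` and `x_{i+1} ↦ x_i`. -/
def artinAut (i : ℕ) : MulAut (FreeGroup ℕ) :=
  MonoidHom.toMulEquiv
    (FreeGroup.lift fun k =>
      if k = i then (of i)⁻¹ * of (i + 1) * of i else if k = i + 1 then of i else of k)
    (FreeGroup.lift fun k =>
      if k = i then of (i + 1) else if k = i + 1 then of (i + 1) * of i * (of (i + 1))⁻¹ else of k)
    (FreeGroup.ext_hom _ _ fun k => by
      rcases eq_or_ne k i with rfl | hi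
      · simp [mul_assoc]
      rcases eq_or_ne k (i + 1) with rfl | hi' <;> simp [*])
    (FreeGroup.ext_hom _ _ fun k => by
      rcases eq_or_ne k i with rfl | hi
      · simp
      rcases eq_or_ne k (i + 1) with rfl | hi' <;> simp [*, mul_assoc])

theorem artinAut_of_self (i : ℕ) : artinAut i (of i) = (of i)⁻¹ * of (i + 1) * of i := by
  simp [artinAut]

theorem artinAut_of_succ (i : ℕ) : artinAut i (of (i + 1)) = of i := by
  simp [artinAut]

theorem artinAut_of_of_ne {i k : ℕ} (hi : k ≠ i) (hi' : k ≠ i + 1) :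
    artinAut i (of k) = of k := by
  simp [artinAut, hi, hi']

theorem mulAut_freeGroup_ext {α : Type*} {a b : MulAut (FreeGroup α)}
    (h : ∀ k, a (of k) = b (of k)) : a = b :=
  MulEquiv.toMonoidHom_injective (FreeGroup.ext_hom _ _ h)

theorem commute_artinAut {i j : ℕ} (h : i + 2 ≤ j) : Commute (artinAut i) (artinAut j) := by
  refine mulAut_freeGroup_ext fun k => ?_
  have hj {k : ℕ} (hk : k < j) : artinAut j (of k) = of k := artinAut_of_of_ne (by omega) (by omega)
  have hi {k : ℕ} (hk : j ≤ k) : artinAut i (of k) = of k := artinAut_of_of_ne (by omega) (by omega)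
  simp only [MulAut.mul_apply]
  rcases eq_or_ne k i with rfl | hki
  · simp only [artinAut_of_self, map_mul, map_inv, hj (k := k) (by omega),
      hj (k := k + 1) (by omega)]
  rcases eq_or_ne k (i + 1) with rfl | hki'
  · simp only [artinAut_of_succ, hj (k := i) (by omega), hj (k := i + 1) (by omega)]
  rw [artinAut_of_of_ne hki hki']
  rcases eq_or_ne k j with rfl | hkj
  · simp only [artinAut_of_self, map_mul, map_inv, hi le_rfl, hi (k.le_add_right 1)]
  rcases eq_or_ne k (j + 1) with rfl | hkj'
  · simp only [artinAut_of_succ, hi le_rfl]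
  rw [artinAut_of_of_ne hkj hkj', artinAut_of_of_ne hki hki']

theorem artinAut_braid (i : ℕ) :
    artinAut i * artinAut (i + 1) * artinAut i =
      artinAut (i + 1) * artinAut i * artinAut (i + 1) := by
  refine mulAut_freeGroup_ext fun k => ?_
  have h₁ : artinAut (i + 1) (of i) = of i := artinAut_of_of_ne (by omega) (by omega)
  have h₂ : artinAut i (of (i + 1 + 1)) = of (i + 1 + 1) := artinAut_of_of_ne (by omega) (by omega)
  simp only [MulAut.mul_apply]
  rcases eq_or_ne k i with rfl | hk
  · simp only [artinAut_of_self, artinAut_of_succ, h₁, h₂, map_mul, map_inv]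
    group
  rcases eq_or_ne k (i + 1) with rfl | hk'
  · simp only [artinAut_of_self, artinAut_of_succ, h₁, h₂, map_mul, map_inv]
  rcases eq_or_ne k (i + 1 + 1) with rfl | hk''
  · simp only [artinAut_of_succ, h₁, h₂]
  · simp only [artinAut_of_of_ne hk hk', artinAut_of_of_ne hk' hk'']

/-- Artin's action of the braid group on a free group. The generators `x_k` with `k ≥ m`, which
are fixed, are kept so that the free group does not depend on `m`. -/
def artinAction (m : ℕ) : BraidGroup m →* MulAut (FreeGroup ℕ) :=
  lift m artinAut (fun _ _ h _ => commute_artinAut h) (fun i _ => artinAut_braid i)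

theorem artinAction_sigma {i : ℕ} (hi : i < m - 1) : artinAction m (sigma m i) = artinAut i :=
  lift_sigma hi

theorem isConj_artinAction_of (b : BraidGroup m) (k : ℕ) :
    IsConj (artinAction m b (of k)) (of (toPerm m b k)) := by
  induction b using induction_on generalizing k with
  | one => rw [map_one, map_one, MulAut.one_apply, Equiv.Perm.one_apply]
  | sigma i hi =>
    rw [artinAction_sigma hi, toPerm_sigma hi]
    rcases eq_or_ne k i with rfl | hki
    · rw [artinAut_of_self, Equiv.swap_apply_left]
      exact isConj_iff.mpr ⟨of k, by group⟩
    rcases eq_or_ne k (i + 1) with rfl | hki'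
    · rw [artinAut_of_succ, Equiv.swap_apply_right]
    · rw [artinAut_of_of_ne hki hki', Equiv.swap_apply_of_ne_of_ne hki hki']
  | mul a b ha hb =>
    rw [map_mul, map_mul, MulAut.mul_apply, Equiv.Perm.mul_apply]
    exact ((artinAction m a).toMonoidHom.map_isConj (hb k)).trans (ha _)
  | inv b hb =>
    have h := (artinAction m b)⁻¹.toMonoidHom.map_isConj (hb ((toPerm m b).symm k))
    rw [Equiv.apply_symm_apply] at h
    simpa using h.symm

theorem abelianization_map_artinAction_eq_id {b : BraidGroup m} (hb : toPerm m b = 1) :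
    Abelianization.map (artinAction m b).toMonoidHom = MonoidHom.id _ := by
  refine Abelianization.hom_ext _ _ (FreeGroup.ext_hom _ _ fun k => ?_)
  have h := Abelianization.of.map_isConj (isConj_artinAction_of b k)
  rwa [isConj_iff_eq, hb, Equiv.Perm.one_apply] at h

end ArtinAction

section Combing

open FreeGroup (of)

variable {M i j k : ℕ}

/-- `σ_k σ_{k+1} ⋯ σ_M`, which carries the last strand to position `k`; these are representatives
of the cosets of the stabilizer of the last strand. -/
def cosetRep (M k : ℕ) : BraidGroup (M + 2) :=
  ((List.range' k (M + 1 - k)).map (sigma (M + 2))).prod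

theorem cosetRep_of_lt (h : M < k) : cosetRep M k = 1 := by
  rw [cosetRep, Nat.sub_eq_zero_of_le h, List.range'_zero, List.map_nil, List.prod_nil]

theorem cosetRep_eq_sigma_mul (M k : ℕ) :
    cosetRep M k = sigma (M + 2) k * cosetRep M (k + 1) := by
  rcases le_or_gt k M with hk | hk
  · rw [cosetRep, cosetRep, show M + 1 - k = M + 1 - (k + 1) + 1 by omega, List.range'_succ,
      List.map_cons, List.prod_cons]
  · rw [cosetRep_of_lt hk, cosetRep_of_lt (by omega), sigma_of_le (by omega), one_mul]

theorem commute_sigma_cosetRep (h : i + 1 < k) : Commute (sigma (M + 2) i) (cosetRep M k) := by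
  refine Commute.list_prod_right _ _ fun x hx => ?_
  obtain ⟨l, hl, rfl⟩ := List.mem_map.mp hx
  exact commute_sigma _ (by have := List.left_le_of_mem_range' hl; omega)

theorem semiconjBy_cosetRep_sigma (hk : k ≤ i) (hi : i < M) :
    SemiconjBy (cosetRep M k) (sigma (M + 2) i) (sigma (M + 2) (i + 1)) := by
  induction hk using Nat.decreasingInduction with
  | self =>
    have hcomm : Commute (sigma (M + 2) i) (cosetRep M (i + 1 + 1)) :=
      commute_sigma_cosetRep (by omega)
    have hbraid : SemiconjBy (sigma (M + 2) i * sigma (M + 2) (i + 1)) (sigma (M + 2) i)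
        (sigma (M + 2) (i + 1)) := by
      rw [SemiconjBy, sigma_braid (by omega), mul_assoc]
    rw [cosetRep_eq_sigma_mul, cosetRep_eq_sigma_mul M (i + 1), ← mul_assoc]
    exact hbraid.mul_left hcomm.symm
  | of_succ k hk ih =>
    rw [cosetRep_eq_sigma_mul]
    exact SemiconjBy.mul_left (commute_sigma _ (by omega)) ih

/-- The pure braid in which the last strand winds once around the strand `k`; it is `1` for
`k > M`. -/
def lastStrandLoop (M k : ℕ) : BraidGroup (M + 2) :=
  (cosetRep M (k + 1))⁻¹ * sigma (M + 2) k ^ 2 * cosetRep M (k + 1)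

theorem semiconjBy_conj_sq_of_braid {G : Type*} [Group G] {s t u : G}
    (hbraid : s * t * s = t * s * t) (hu : Commute s u) :
    SemiconjBy s (u⁻¹ * t ^ 2 * u) ((t * u)⁻¹ * s ^ 2 * (t * u)) := by
  have hmid : SemiconjBy s (t ^ 2) (t⁻¹ * s ^ 2 * t) := by
    calc s * t ^ 2 = t⁻¹ * (t * s * t) * t := by rw [sq]; group
      _ = t⁻¹ * (s * t * s) * t := by rw [hbraid]
      _ = t⁻¹ * s * (t * s * t) := by group
      _ = t⁻¹ * s ^ 2 * t * s := by rw [← hbraid, sq]; group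
  have hconj : (t * u)⁻¹ * s ^ 2 * (t * u) = u⁻¹ * (t⁻¹ * s ^ 2 * t) * u := by group
  rw [hconj]
  exact (SemiconjBy.mul_right hu.inv_right hmid).mul_right hu

theorem commute_conj_sq_mul_conj_sq_of_braid {G : Type*} [Group G] {s t u : G}
    (hbraid : s * t * s = t * s * t) (hu : Commute s u) :
    Commute s ((u⁻¹ * t ^ 2 * u) * ((t * u)⁻¹ * s ^ 2 * (t * u))) := by
  have hprod : (u⁻¹ * t ^ 2 * u) * ((t * u)⁻¹ * s ^ 2 * (t * u)) = u⁻¹ * (t * s ^ 2 * t) * u := by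
    group
  have hmid : Commute s (t * s ^ 2 * t) := by
    calc s * (t * s ^ 2 * t) = (s * t * s) * s * t := by rw [sq]; group
      _ = t * s * (t * s * t) := by rw [hbraid]; group
      _ = t * s ^ 2 * t * s := by rw [← hbraid, sq]; group
  rw [hprod]
  exact (hu.inv_right.mul_right hmid).mul_right hu

theorem semiconjBy_sigma_lastStrandLoop_succ (hi : i < M) :
    SemiconjBy (sigma (M + 2) i) (lastStrandLoop M (i + 1)) (lastStrandLoop M i) := by
  rw [lastStrandLoop, lastStrandLoop, cosetRep_eq_sigma_mul M (i + 1)]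
  exact semiconjBy_conj_sq_of_braid (sigma_braid (by omega)) (commute_sigma_cosetRep (by omega))

theorem commute_sigma_lastStrandLoop_mul (hi : i < M) :
    Commute (sigma (M + 2) i) (lastStrandLoop M (i + 1) * lastStrandLoop M i) := by
  rw [lastStrandLoop, lastStrandLoop, cosetRep_eq_sigma_mul M (i + 1)]
  exact commute_conj_sq_mul_conj_sq_of_braid (sigma_braid (by omega))
    (commute_sigma_cosetRep (by omega))

theorem commute_sigma_lastStrandLoop (hi : i < M) (hki : k ≠ i) (hki' : k ≠ i + 1) :
    Commute (sigma (M + 2) i) (lastStrandLoop M k) := by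
  rcases lt_or_gt_of_ne hki with h | h
  · have hrep := semiconjBy_cosetRep_sigma (k := k + 1) h hi
    have hsq : Commute (sigma (M + 2) k ^ 2) (sigma (M + 2) (i + 1)) :=
      (commute_sigma _ (by omega)).pow_left 2
    exact ((hrep.inv_symm_left.mul_left hsq).mul_left hrep).symm
  · have hrep : Commute (sigma (M + 2) i) (cosetRep M (k + 1)) :=
      commute_sigma_cosetRep (by omega)
    exact (hrep.inv_right.mul_right ((commute_sigma _ (by omega)).pow_right 2)).mul_right hrep

/-- The inclusion of braid groups that adds a last strand. -/
def addStrand (M : ℕ) : BraidGroup (M + 1) →* BraidGroup (M + 2) :=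
  lift (M + 1) (sigma (M + 2)) (fun _ _ h _ => commute_sigma _ h)
    (fun _ h => sigma_braid (by omega))

theorem addStrand_sigma (hi : i < M) : addStrand M (sigma (M + 1) i) = sigma (M + 2) i :=
  lift_sigma hi

/-- The homomorphism from the free group onto the braids in which only the last strand moves. -/
def lastStrandHom (M : ℕ) : FreeGroup ℕ →* BraidGroup (M + 2) :=
  FreeGroup.lift (lastStrandLoop M)

theorem lastStrandHom_of (M k : ℕ) : lastStrandHom M (of k) = lastStrandLoop M k :=
  FreeGroup.lift_apply_of

theorem semiconjBy_sigma_lastStrandHom (hi : i < M) (x : FreeGroup ℕ) :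
    SemiconjBy (sigma (M + 2) i) (lastStrandHom M x) (lastStrandHom M (artinAut i x)) := by
  induction x using FreeGroup.induction_on with
  | C1 => simp only [map_one, SemiconjBy.one_right]
  | of k =>
    rcases eq_or_ne k i with rfl | hki
    · have hsucc := semiconjBy_sigma_lastStrandLoop_succ hi
      have hprod := commute_sigma_lastStrandLoop_mul hi
      simp only [artinAut_of_self, map_mul, map_inv, lastStrandHom_of]
      simpa only [inv_mul_cancel_left, mul_assoc] using hsucc.inv_right.mul_right hprod
    rcases eq_or_ne k (i + 1) with rfl | hki'
    · simpa only [artinAut_of_succ, lastStrandHom_of] using semiconjBy_sigma_lastStrandLoop_succ hi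
    · rw [artinAut_of_of_ne hki hki', lastStrandHom_of]
      exact commute_sigma_lastStrandLoop hi hki hki'
  | inv_of k hk => simpa only [map_inv] using hk.inv_right
  | mul x y hx hy => simpa only [map_mul] using hx.mul_right hy

theorem semiconjBy_addStrand_lastStrandHom (b : BraidGroup (M + 1)) (x : FreeGroup ℕ) :
    SemiconjBy (addStrand M b) (lastStrandHom M x)
      (lastStrandHom M (artinAction (M + 1) b x)) := by
  induction b using induction_on generalizing x with
  | one => simp only [map_one, MulAut.one_apply, SemiconjBy.one_left]
  | sigma i hi =>
    rw [artinAction_sigma hi, addStrand_sigma (M := M) hi]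
    exact semiconjBy_sigma_lastStrandHom hi x
  | mul a b ha hb =>
    rw [map_mul, map_mul, MulAut.mul_apply]
    exact (ha _).mul_left (hb x)
  | inv a ha =>
    have h := (ha ((artinAction (M + 1) a)⁻¹ x)).inv_symm_left
    rwa [MulAut.apply_inv_self, ← map_inv, ← map_inv] at h

/-- The semidirect product of Artin's action, which models the stabilizer of the last strand in
`BraidGroup (M + 2)`. -/
abbrev CombedGroup (M : ℕ) := FreeGroup ℕ ⋊[artinAction (M + 1)] BraidGroup (M + 1)

/-- The braid presented by a combed one: first the last strand moves, then all the others. -/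
def uncomb (M : ℕ) : CombedGroup M →* BraidGroup (M + 2) :=
  SemidirectProduct.lift (lastStrandHom M) (addStrand M) fun b => MonoidHom.ext fun x =>
    eq_mul_inv_of_mul_eq (semiconjBy_addStrand_lastStrandHom b x).eq.symm

theorem toPerm_lastStrandLoop (M k : ℕ) : toPerm (M + 2) (lastStrandLoop M k) = 1 := by
  have hsq : toPerm (M + 2) (sigma (M + 2) k) ^ 2 = 1 := by
    rcases lt_or_ge k (M + 2 - 1) with h | h
    · rw [toPerm_sigma h, sq, Equiv.swap_mul_self]
    · rw [sigma_of_le h, map_one, one_pow]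
  rw [lastStrandLoop, map_mul, map_mul, map_pow, hsq, mul_one, map_inv, inv_mul_cancel]

theorem toPerm_addStrand (b : BraidGroup (M + 1)) :
    toPerm (M + 2) (addStrand M b) = toPerm (M + 1) b := by
  induction b using induction_on with
  | one => simp only [map_one]
  | sigma i hi =>
    rw [addStrand_sigma (M := M) hi, toPerm_sigma hi, toPerm_sigma (Nat.lt_succ_of_lt hi)]
  | mul a b ha hb => rw [map_mul, map_mul, map_mul, ha, hb]
  | inv a ha => rw [map_inv, map_inv, map_inv, ha]

theorem toPerm_uncomb (γ : CombedGroup M) :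
    toPerm (M + 2) (uncomb M γ) = toPerm (M + 1) γ.right := by
  have hloop : (toPerm (M + 2)).comp (lastStrandHom M) = 1 :=
    FreeGroup.ext_hom _ _ fun k => by
      rw [MonoidHom.comp_apply, lastStrandHom_of, toPerm_lastStrandLoop, MonoidHom.one_apply]
  have huncomb : uncomb M γ = lastStrandHom M γ.left * addStrand M γ.right := rfl
  rw [huncomb, map_mul, toPerm_addStrand, ← MonoidHom.comp_apply, hloop, MonoidHom.one_apply,
    one_mul]

/-- The generator of `CombedGroup M` corresponding to `σ_i`. -/
def combedSigma (M i : ℕ) : CombedGroup M :=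
  SemidirectProduct.inr (sigma (M + 1) i)

/-- The generator of `CombedGroup M` corresponding to the loop around the strand `k`. -/
def combedLoop (M k : ℕ) : CombedGroup M :=
  SemidirectProduct.inl (of k)

theorem uncomb_combedSigma (hi : i < M) : uncomb M (combedSigma M i) = sigma (M + 2) i := by
  rw [uncomb, combedSigma, SemidirectProduct.lift_inr, addStrand_sigma hi]

theorem uncomb_combedLoop (M k : ℕ) : uncomb M (combedLoop M k) = lastStrandLoop M k := by
  rw [uncomb, combedLoop, SemidirectProduct.lift_inl, lastStrandHom_of]

theorem commute_combedSigma (M : ℕ) (h : i + 2 ≤ j) :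
    Commute (combedSigma M i) (combedSigma M j) :=
  (commute_sigma _ h).map SemidirectProduct.inr

theorem combedSigma_braid (hi : i + 1 < M) :
    combedSigma M i * combedSigma M (i + 1) * combedSigma M i =
      combedSigma M (i + 1) * combedSigma M i * combedSigma M (i + 1) := by
  simp only [combedSigma, ← map_mul, sigma_braid (m := M + 1) hi]

theorem semiconjBy_combedSigma_inl (hi : i < M) (x : FreeGroup ℕ) :
    SemiconjBy (combedSigma M i) (SemidirectProduct.inl x)
      (SemidirectProduct.inl (artinAut i x)) := by
  have h := SemidirectProduct.inl_aut (φ := artinAction (M + 1)) (sigma (M + 1) i) x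
  rw [artinAction_sigma hi, map_inv, eq_mul_inv_iff_mul_eq] at h
  exact h.symm

theorem semiconjBy_combedSigma_combedLoop_succ (hi : i < M) :
    SemiconjBy (combedSigma M i) (combedLoop M (i + 1)) (combedLoop M i) := by
  have h := semiconjBy_combedSigma_inl hi (of (i + 1))
  rwa [artinAut_of_succ] at h

theorem commute_combedSigma_combedLoop (hi : i < M) (hki : k ≠ i) (hki' : k ≠ i + 1) :
    Commute (combedSigma M i) (combedLoop M k) := by
  have h := semiconjBy_combedSigma_inl hi (of k)
  rwa [artinAut_of_of_ne hki hki'] at h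

theorem commute_combedSigma_combedLoop_mul (hi : i < M) :
    Commute (combedSigma M i) (combedLoop M (i + 1) * combedLoop M i) := by
  have h := semiconjBy_combedSigma_inl hi (of (i + 1) * of i)
  rwa [map_mul (artinAut i), artinAut_of_succ, artinAut_of_self, mul_assoc, mul_inv_cancel_left,
    map_mul] at h

/-- The coefficient `c` in `σ_i u_k = u_{σ_i(k)} c`, where `u_k = cosetRep M k`. There are only
`M + 2` cosets, hence the value `1` for `k > M + 1`. -/
def monomialCoeff (M i k : ℕ) : CombedGroup M :=
  if k < i then combedSigma M (i - 1)
  else if k = i then combedLoop M i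
  else if k = i + 1 then 1
  else if k ≤ M + 1 then combedSigma M i
  else 1

/-- The action of `σ_i` on pairs `(k, γ)` that describes left multiplication on the products
`cosetRep M k * uncomb M γ`. -/
def monomialGen (M i : ℕ) : Equiv.Perm (ℕ × CombedGroup M) :=
  Equiv.prodShear (Equiv.swap i (i + 1)) fun k => Equiv.mulLeft (monomialCoeff M i k)

theorem monomialGen_apply (M i k : ℕ) (γ : CombedGroup M) :
    monomialGen M i (k, γ) = (Equiv.swap i (i + 1) k, monomialCoeff M i k * γ) := rfl

theorem monomialGen_of_lt (h : k < i) (γ : CombedGroup M) :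
    monomialGen M i (k, γ) = (k, combedSigma M (i - 1) * γ) := by
  rw [monomialGen_apply, monomialCoeff, if_pos h,
    Equiv.swap_apply_of_ne_of_ne (by omega) (by omega)]

theorem monomialGen_self (γ : CombedGroup M) :
    monomialGen M i (i, γ) = (i + 1, combedLoop M i * γ) := by
  rw [monomialGen_apply, monomialCoeff, if_neg (lt_irrefl i), if_pos rfl, Equiv.swap_apply_left]

theorem monomialGen_succ (γ : CombedGroup M) : monomialGen M i (i + 1, γ) = (i, γ) := by
  rw [monomialGen_apply, monomialCoeff, if_neg (by omega), if_neg (by omega), if_pos rfl,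
    Equiv.swap_apply_right, one_mul]

theorem monomialGen_of_gt (h : i + 1 < k) (hk : k ≤ M + 1) (γ : CombedGroup M) :
    monomialGen M i (k, γ) = (k, combedSigma M i * γ) := by
  rw [monomialGen_apply, monomialCoeff, if_neg (by omega), if_neg (by omega), if_neg (by omega),
    if_pos hk, Equiv.swap_apply_of_ne_of_ne (by omega) (by omega)]

theorem monomialGen_of_big (hi : i ≤ M) (hk : M + 1 < k) (γ : CombedGroup M) :
    monomialGen M i (k, γ) = (k, γ) := by
  rw [monomialGen_apply, monomialCoeff, if_neg (by omega), if_neg (by omega), if_neg (by omega),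
    if_neg (by omega), one_mul, Equiv.swap_apply_of_ne_of_ne (by omega) (by omega)]

theorem commute_monomialGen (h : i + 2 ≤ j) (hj : j ≤ M) :
    Commute (monomialGen M i) (monomialGen M j) := by
  refine Equiv.ext fun ⟨k, γ⟩ => ?_
  simp only [Equiv.Perm.mul_apply]
  rcases lt_or_ge (M + 1) k with hkM | hkM
  · simp (disch := omega) only [monomialGen_of_big]
  rcases lt_trichotomy k i with hki | rfl | hki
  · simp (disch := omega) only [monomialGen_of_lt, ← mul_assoc]
    rw [(commute_combedSigma M (by omega)).eq]
  · simp (disch := omega) only [monomialGen_of_lt, monomialGen_self, ← mul_assoc]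
    rw [(commute_combedSigma_combedLoop (by omega) (by omega) (by omega)).eq]
  rcases eq_or_lt_of_le (Nat.succ_le_of_lt hki) with rfl | hki'
  · simp (disch := omega) only [Nat.succ_eq_add_one, monomialGen_of_lt, monomialGen_succ]
  rcases lt_trichotomy k j with hkj | rfl | hkj
  · simp (disch := omega) only [monomialGen_of_lt, monomialGen_of_gt, ← mul_assoc]
    rw [(commute_combedSigma M (by omega)).eq]
  · simp (disch := omega) only [monomialGen_self, monomialGen_of_gt, ← mul_assoc]
    rw [(commute_combedSigma_combedLoop (by omega) (by omega) (by omega)).eq]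
  rcases eq_or_lt_of_le (Nat.succ_le_of_lt hkj) with rfl | hkj'
  · simp (disch := omega) only [Nat.succ_eq_add_one, monomialGen_of_gt, monomialGen_succ]
  · simp (disch := omega) only [monomialGen_of_gt, ← mul_assoc]
    rw [(commute_combedSigma M h).eq]

theorem monomialGen_braid (hi : i + 1 ≤ M) :
    monomialGen M i * monomialGen M (i + 1) * monomialGen M i =
      monomialGen M (i + 1) * monomialGen M i * monomialGen M (i + 1) := by
  refine Equiv.ext fun ⟨k, γ⟩ => ?_
  simp only [Equiv.Perm.mul_apply]
  rcases lt_or_ge (M + 1) k with hkM | hkM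
  · simp (disch := omega) only [monomialGen_of_big]
  rcases lt_trichotomy k i with hki | rfl | hki
  · obtain ⟨i, rfl⟩ : ∃ i', i = i' + 1 := ⟨i - 1, by omega⟩
    simp (disch := omega) only [monomialGen_of_lt, add_tsub_cancel_right, ← mul_assoc]
    rw [combedSigma_braid (by omega)]
  · simp (disch := omega) only [monomialGen_of_lt, monomialGen_self, monomialGen_of_gt,
      add_tsub_cancel_right, ← mul_assoc]
    rw [mul_assoc (combedSigma M k), (commute_combedSigma_combedLoop_mul (by omega)).eq]
  rcases eq_or_lt_of_le (Nat.succ_le_of_lt hki) with rfl | hki'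
  · simp (disch := omega) only [Nat.succ_eq_add_one, monomialGen_of_lt, monomialGen_self,
      monomialGen_succ, monomialGen_of_gt, add_tsub_cancel_right, ← mul_assoc]
    rw [(semiconjBy_combedSigma_combedLoop_succ (by omega)).eq]
  rcases eq_or_lt_of_le (Nat.succ_le_of_lt hki') with rfl | hki''
  · simp (disch := omega) only [Nat.succ_eq_add_one, monomialGen_of_lt, monomialGen_succ,
      monomialGen_of_gt, add_tsub_cancel_right]
  · simp (disch := omega) only [monomialGen_of_gt, ← mul_assoc]
    rw [combedSigma_braid (by omega)]

/-- The action of the braid group on itself by left multiplication, written in terms of cosets of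
the stabilizer of the last strand. -/
def monomialRep (M : ℕ) : BraidGroup (M + 2) →* Equiv.Perm (ℕ × CombedGroup M) :=
  lift (M + 2) (monomialGen M) (fun _ _ h hj => commute_monomialGen h (Nat.le_of_lt_succ hj))
    (fun _ hi => monomialGen_braid (Nat.le_of_lt_succ hi))

theorem monomialRep_sigma (hi : i ≤ M) : monomialRep M (sigma (M + 2) i) = monomialGen M i :=
  lift_sigma (Nat.lt_succ_of_le hi)

theorem monomialRep_fst (w : BraidGroup (M + 2)) (x : ℕ × CombedGroup M) :
    (monomialRep M w x).1 = toPerm (M + 2) w x.1 := by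
  induction w using induction_on generalizing x with
  | one => simp only [map_one, Equiv.Perm.one_apply]
  | sigma i hi => rw [monomialRep_sigma (Nat.le_of_lt_succ hi), toPerm_sigma hi]; rfl
  | mul a b ha hb => rw [map_mul, map_mul, Equiv.Perm.mul_apply, Equiv.Perm.mul_apply, ha, hb]
  | inv a ha =>
    rw [map_inv, map_inv, Equiv.Perm.eq_inv_iff_eq, ← ha]
    exact congrArg Prod.fst ((monomialRep M a).apply_symm_apply x)

theorem monomialRep_map_mul_right (w : BraidGroup (M + 2)) (δ : CombedGroup M)
    (x : ℕ × CombedGroup M) :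
    monomialRep M w (x.map id (· * δ)) = (monomialRep M w x).map id (· * δ) := by
  induction w using induction_on generalizing x with
  | one => simp only [map_one, Equiv.Perm.one_apply]
  | sigma i hi =>
    rw [monomialRep_sigma (Nat.le_of_lt_succ hi)]
    exact Prod.ext rfl (mul_assoc _ _ _).symm
  | mul a b ha hb => rw [map_mul, Equiv.Perm.mul_apply, Equiv.Perm.mul_apply, hb, ha]
  | inv a ha =>
    rw [map_inv, Equiv.Perm.inv_eq_iff_eq, ha]
    exact congrArg _ ((monomialRep M a).apply_symm_apply x).symm

/-- The braid `cosetRep M k * uncomb M γ` represented by a pair `(k, γ)`. -/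
def cosetEval (M : ℕ) (x : ℕ × CombedGroup M) : BraidGroup (M + 2) :=
  cosetRep M x.1 * uncomb M x.2

theorem cosetEval_monomialGen (hi : i ≤ M) (x : ℕ × CombedGroup M) (hx : x.1 < M + 2) :
    cosetEval M (monomialGen M i x) = sigma (M + 2) i * cosetEval M x := by
  obtain ⟨k, γ⟩ := x
  rcases lt_trichotomy k i with hki | rfl | hki
  · obtain ⟨i, rfl⟩ : ∃ i', i = i' + 1 := ⟨i - 1, by omega⟩
    simp only [monomialGen_of_lt hki, cosetEval, map_mul, add_tsub_cancel_right,
      uncomb_combedSigma (Nat.lt_of_succ_le hi), ← mul_assoc,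
      (semiconjBy_cosetRep_sigma (Nat.le_of_lt_succ hki) hi).eq]
  · simp only [monomialGen_self, cosetEval, map_mul, uncomb_combedLoop, lastStrandLoop,
      cosetRep_eq_sigma_mul M k, sq, mul_assoc, mul_inv_cancel_left]
  rcases eq_or_lt_of_le (Nat.succ_le_of_lt hki) with rfl | hki'
  · simp only [Nat.succ_eq_add_one, monomialGen_succ, cosetEval, cosetRep_eq_sigma_mul M i,
      mul_assoc]
  · have hiM : i < M := by simp only at hx; omega
    simp only [monomialGen_of_gt hki' (Nat.le_of_lt_succ hx), cosetEval, map_mul,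
      uncomb_combedSigma hiM, ← mul_assoc, (commute_sigma_cosetRep hki').eq]

theorem cosetEval_monomialRep (w : BraidGroup (M + 2)) (x : ℕ × CombedGroup M)
    (hx : x.1 < M + 2) : cosetEval M (monomialRep M w x) = w * cosetEval M x := by
  induction w using induction_on generalizing x with
  | one => rw [map_one, Equiv.Perm.one_apply, one_mul]
  | sigma i hi =>
    rw [monomialRep_sigma (Nat.le_of_lt_succ hi)]
    exact cosetEval_monomialGen (Nat.le_of_lt_succ hi) x hx
  | mul a b ha hb =>
    have hbx : (monomialRep M b x).1 < M + 2 := by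
      rwa [monomialRep_fst, toPerm_apply_lt_iff]
    rw [map_mul, Equiv.Perm.mul_apply, ha _ hbx, hb x hx, mul_assoc]
  | inv a ha =>
    have hax : (monomialRep M a⁻¹ x).1 < M + 2 := by
      rwa [monomialRep_fst, toPerm_apply_lt_iff]
    rw [eq_inv_mul_iff_mul_eq, ← ha _ hax, ← Equiv.Perm.mul_apply, ← map_mul, mul_inv_cancel,
      map_one, Equiv.Perm.one_apply]

/-- Artin's combing: the decomposition of a pure braid into a motion of the last strand and a
braid of the other strands. For a braid that moves the last strand it is a meaningless element. -/
def comb (M : ℕ) (w : BraidGroup (M + 2)) : CombedGroup M :=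
  (monomialRep M w (M + 1, 1)).2

variable {w : BraidGroup (M + 2)}

theorem monomialRep_apply_last (hw : toPerm (M + 2) w = 1) (δ : CombedGroup M) :
    monomialRep M w (M + 1, δ) = (M + 1, comb M w * δ) := by
  have hfst := monomialRep_fst w (M + 1, (1 : CombedGroup M))
  rw [hw, Equiv.Perm.one_apply] at hfst
  have h := monomialRep_map_mul_right w δ (M + 1, 1)
  rw [Prod.map_apply, id, one_mul] at h
  rw [h]
  exact Prod.ext hfst rfl

theorem uncomb_comb (hw : toPerm (M + 2) w = 1) : uncomb M (comb M w) = w := by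
  have h := cosetEval_monomialRep w (M + 1, (1 : CombedGroup M)) (Nat.lt_succ_self _)
  simpa only [monomialRep_apply_last hw, cosetEval, cosetRep_of_lt (Nat.lt_succ_self M), mul_one,
    one_mul, map_one] using h

theorem toPerm_comb_right (hw : toPerm (M + 2) w = 1) :
    toPerm (M + 1) (comb M w).right = 1 := by
  rw [← toPerm_uncomb, uncomb_comb hw, hw]

theorem comb_pow (hw : toPerm (M + 2) w = 1) (n : ℕ) : comb M (w ^ n) = comb M w ^ n := by
  induction n with
  | zero => rw [pow_zero, pow_zero, comb, map_one, Equiv.Perm.one_apply]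
  | succ n ih =>
    have hwn : toPerm (M + 2) (w ^ n) = 1 := by rw [map_pow, hw, one_pow]
    rw [comb, pow_succ, map_mul, Equiv.Perm.mul_apply, monomialRep_apply_last hw,
      monomialRep_apply_last hwn, mul_one, ih, pow_succ]

end Combing

section UniqueRoots

theorem eq_of_pow_eq_of_toPerm_eq_one {m : ℕ} {x y : BraidGroup m} (hx : toPerm m x = 1)
    (hy : toPerm m y = 1) {N : ℕ} (hN : N ≠ 0) (hxy : x ^ N = y ^ N) : x = y := by
  match m with
  | 0 | 1 => rw [eq_one_of_le_one (by omega) x, eq_one_of_le_one (by omega) y]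
  | M + 2 =>
    have hpow : comb M x ^ N = comb M y ^ N := by rw [← comb_pow hx, ← comb_pow hy, hxy]
    have hright : (comb M x).right = (comb M y).right := by
      refine eq_of_pow_eq_of_toPerm_eq_one (toPerm_comb_right hx) (toPerm_comb_right hy) hN ?_
      simpa only [map_pow, SemidirectProduct.rightHom_eq_right] using
        congrArg SemidirectProduct.rightHom hpow
    have hcomb : comb M x = comb M y :=
      eq_of_pow_eq_of_abelianization_map_eq_id (K := ℚ) eq_of_forall_of_sub_of_mem_augIdeal_pow
        (abelianization_map_artinAction_eq_id (toPerm_comb_right hx)) hright hN hpow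
    rw [← uncomb_comb hx, hcomb, uncomb_comb hy]

theorem commute_pow_factorial_of_commute_pow {m : ℕ} {x y : BraidGroup m} {N : ℕ} (hN : N ≠ 0)
    (h : Commute (x ^ N) y) : Commute (x ^ m.factorial) y := by
  have hpure := toPerm_pow_factorial x
  have hconj : y * x ^ m.factorial * y⁻¹ = x ^ m.factorial := by
    refine eq_of_pow_eq_of_toPerm_eq_one ?_ hpure hN ?_
    · rw [map_mul, map_mul, hpure, mul_one, map_inv, mul_inv_cancel]
    · rw [conj_pow, pow_right_comm, mul_inv_eq_iff_eq_mul]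
      exact (h.pow_left _).symm.eq
  exact (mul_inv_eq_iff_eq_mul.mp hconj).symm

end UniqueRoots

end BraidGroup

section Hurwitz

variable {G : Type*} [Group G] {n : ℕ} (s : Fin n → G)

theorem hurwitzAct_mul (v w : FreeGroup (Fin (n - 1))) :
    hurwitzAct (v * w) s = hurwitzAct w (hurwitzAct v s) := by
  simp only [hurwitzAct, map_mul, MulOpposite.unop_mul, Equiv.Perm.mul_apply]

theorem hurwitzAct_one : hurwitzAct 1 s = s := by
  simp [hurwitzAct]

theorem hurwitzAct_injective (w : FreeGroup (Fin (n - 1))) :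
    Function.Injective (hurwitzAct (G := G) w) :=
  Equiv.injective _

variable {s}

theorem hurwitzAct_pow_eq_self {w : FreeGroup (Fin (n - 1))} (h : hurwitzAct w s = s) (k : ℕ) :
    hurwitzAct (w ^ k) s = s := by
  induction k with
  | zero => rw [pow_zero, hurwitzAct_one]
  | succ k ih => rw [pow_succ, hurwitzAct_mul, ih, h]

theorem exists_hurwitzAct_pow_eq_self (hfin : (hurwitzOrbit s).Finite)
    (w : FreeGroup (Fin (n - 1))) : ∃ N ≠ 0, hurwitzAct (w ^ N) s = s := by
  obtain ⟨a, b, hab, heq⟩ := hfin.exists_lt_map_eq_of_forall_mem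
    (f := fun r : ℕ => hurwitzAct (w ^ r) s) (fun r => (⟨w ^ r, rfl⟩ : _ ∈ hurwitzOrbit s))
  obtain ⟨d, rfl⟩ := Nat.exists_eq_add_of_lt hab
  refine ⟨d + 1, d.succ_ne_zero, hurwitzAct_injective (w ^ a) ?_⟩
  rw [← hurwitzAct_mul, ← pow_add, heq]
  congr 2
  omega

/-- The sequence obtained from a tuple by padding with `1`. Entries are indexed from `0`, so that
`extendByOne s k` is `β_{k+1}`; padding avoids bounds proofs in the index computations. -/
def extendByOne (s : Fin n → G) (k : ℕ) : G := if h : k < n then s ⟨k, h⟩ else 1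

theorem extendByOne_val (s : Fin n → G) (k : Fin n) : extendByOne s k = s k :=
  dif_pos k.isLt

theorem extendByOne_injective : Function.Injective (extendByOne (G := G) (n := n)) :=
  fun s t h => funext fun k => by rw [← extendByOne_val s, h, extendByOne_val]

section Generator

variable {l : ℕ} (hl : l + 1 < n) (s : Fin n → G)

include hl

theorem hurwitzAct_genWord_succ :
    hurwitzAct (genWord n (l + 1)) s = hEquiv (G := G) (n := n) ⟨l, by omega⟩ s := by
  rw [genWord, dif_pos ⟨by omega, by omega⟩, hurwitzAct, FreeGroup.lift_apply_of]
  rfl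

theorem extendByOne_genWord_left :
    extendByOne (hurwitzAct (genWord n (l + 1)) s) l = extendByOne s (l + 1) := by
  simp [extendByOne, hurwitzAct_genWord_succ hl, hEquiv, hl, Nat.lt_of_succ_lt hl]

theorem extendByOne_genWord_right :
    extendByOne (hurwitzAct (genWord n (l + 1)) s) (l + 1) =
      (extendByOne s (l + 1))⁻¹ * extendByOne s l * extendByOne s (l + 1) := by
  simp [extendByOne, hurwitzAct_genWord_succ hl, hEquiv, hl, Nat.lt_of_succ_lt hl]

theorem extendByOne_genWord_of_ne {k : ℕ} (h₁ : k ≠ l) (h₂ : k ≠ l + 1) :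
    extendByOne (hurwitzAct (genWord n (l + 1)) s) k = extendByOne s k := by
  simp [extendByOne, hurwitzAct_genWord_succ hl, hEquiv, h₁, h₂]

end Generator

/-- The word `σ_1 σ_2 ⋯ σ_l`. -/
def ascWord (n l : ℕ) : FreeGroup (Fin (n - 1)) :=
  ((List.range l).map fun t => genWord n (t + 1)).prod

/-- The word `σ_l ⋯ σ_2 σ_1`. -/
def descWord (n l : ℕ) : FreeGroup (Fin (n - 1)) :=
  ((List.range l).reverse.map fun t => genWord n (t + 1)).prod

/-- The word `c_1 c_2 ⋯ c_l`. -/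
def cProd (n l : ℕ) : FreeGroup (Fin (n - 1)) :=
  ((List.range l).map fun t => cWord n (t + 1)).prod

theorem ascWord_succ (n l : ℕ) : ascWord n (l + 1) = ascWord n l * genWord n (l + 1) := by
  simp [ascWord, List.range_succ]

theorem descWord_succ (n l : ℕ) : descWord n (l + 1) = genWord n (l + 1) * descWord n l := by
  simp [descWord, List.range_succ]

theorem cWord_succ (n l : ℕ) :
    cWord n (l + 1) = (descWord n l)⁻¹ * genWord n (l + 1) ^ 2 * descWord n l := by
  simp [cWord, descWord, List.prod_inv_reverse, List.map_reverse, Function.comp_def]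

theorem cProd_eq_ascWord_mul_descWord (n l : ℕ) : cProd n l = ascWord n l * descWord n l := by
  induction l with
  | zero => simp [cProd, ascWord, descWord]
  | succ l ih =>
    have hsucc : cProd n (l + 1) = cProd n l * cWord n (l + 1) := by
      simp [cProd, List.range_succ]
    rw [hsucc, ih, cWord_succ, ascWord_succ, descWord_succ, pow_two]
    group

/-- The product `S 1 * S 2 * ⋯ * S l`, which omits `S 0`. -/
def tailProd (S : ℕ → G) (l : ℕ) : G := ((List.range l).map fun t => S (t + 1)).prod

theorem tailProd_succ (S : ℕ → G) (l : ℕ) : tailProd S (l + 1) = tailProd S l * S (l + 1) := by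
  simp [tailProd, List.range_succ]

theorem tailProd_eq_conj {S T : ℕ → G} {x : G} {l : ℕ}
    (h : ∀ k < l, T (k + 1) = x⁻¹ * S (k + 1) * x) : tailProd T l = x⁻¹ * tailProd S l * x := by
  induction l with
  | zero => simp [tailProd]
  | succ l ih =>
    rw [tailProd_succ, tailProd_succ, ih fun k hk => h k (by omega), h l (by omega)]
    group

/-- The partial Coxeter element `S 0 * S 1 * ⋯ * S l`. -/
def coxeterProd (S : ℕ → G) (l : ℕ) : G := S 0 * tailProd S l

theorem prod_map_castLE_eq_coxeterProd {l : ℕ} (hl : l + 1 ≤ n) (s : Fin n → G) :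
    ((List.finRange (l + 1)).map fun t => s (Fin.castLE hl t)).prod =
      coxeterProd (extendByOne s) l := by
  have hrange : (List.finRange (l + 1)).map (fun t => s (Fin.castLE hl t)) =
      (List.range (l + 1)).map (extendByOne s) := by
    rw [← List.map_coe_finRange_eq_range, List.map_map]
    exact List.map_congr_left fun t _ => (extendByOne_val s (Fin.castLE hl t)).symm
  rw [hrange, List.range_succ_eq_map, List.map_cons, List.prod_cons, List.map_map]
  rfl

section Words

variable {k l : ℕ} (hl : l < n) (s : Fin n → G)

include hl

theorem extendByOne_ascWord_of_gt (hk : l < k) :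
    extendByOne (hurwitzAct (ascWord n l) s) k = extendByOne s k := by
  induction l with
  | zero => simp [ascWord, hurwitzAct_one]
  | succ l ih =>
    rw [ascWord_succ, hurwitzAct_mul, extendByOne_genWord_of_ne hl _ (by omega) (by omega),
      ih (by omega) (by omega)]

theorem extendByOne_ascWord_of_lt (hk : k < l) :
    extendByOne (hurwitzAct (ascWord n l) s) k = extendByOne s (k + 1) := by
  induction l with
  | zero => omega
  | succ l ih =>
    rw [ascWord_succ, hurwitzAct_mul]
    rcases Nat.lt_succ_iff_lt_or_eq.1 hk with hlt | rfl
    · rw [extendByOne_genWord_of_ne hl _ (by omega) (by omega), ih (by omega) hlt]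
    · rw [extendByOne_genWord_left hl, extendByOne_ascWord_of_gt (by omega) _ (by omega)]

theorem extendByOne_ascWord_self :
    extendByOne (hurwitzAct (ascWord n l) s) l =
      (tailProd (extendByOne s) l)⁻¹ * extendByOne s 0 * tailProd (extendByOne s) l := by
  induction l with
  | zero => simp [ascWord, hurwitzAct_one, tailProd]
  | succ l ih =>
    rw [ascWord_succ, hurwitzAct_mul, extendByOne_genWord_right hl, ih (by omega),
      extendByOne_ascWord_of_gt (by omega) _ (by omega), tailProd_succ]
    group

theorem extendByOne_descWord_of_gt (hk : l < k) :
    extendByOne (hurwitzAct (descWord n l) s) k = extendByOne s k := by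
  induction l generalizing s with
  | zero => simp [descWord, hurwitzAct_one]
  | succ l ih =>
    rw [descWord_succ, hurwitzAct_mul, ih (by omega) _ (by omega),
      extendByOne_genWord_of_ne hl _ (by omega) (by omega)]

theorem extendByOne_descWord_zero :
    extendByOne (hurwitzAct (descWord n l) s) 0 = extendByOne s l := by
  induction l generalizing s with
  | zero => simp [descWord, hurwitzAct_one]
  | succ l ih =>
    rw [descWord_succ, hurwitzAct_mul, ih (by omega), extendByOne_genWord_left hl]

theorem extendByOne_descWord_succ (hk : k < l) :
    extendByOne (hurwitzAct (descWord n l) s) (k + 1) =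
      (extendByOne s l)⁻¹ * extendByOne s k * extendByOne s l := by
  induction l generalizing s with
  | zero => omega
  | succ l ih =>
    rw [descWord_succ, hurwitzAct_mul]
    rcases Nat.lt_succ_iff_lt_or_eq.1 hk with hlt | rfl
    · rw [ih (by omega) _ hlt, extendByOne_genWord_left hl,
        extendByOne_genWord_of_ne hl _ (by omega) (by omega)]
    · rw [extendByOne_descWord_of_gt (by omega) _ (by omega), extendByOne_genWord_right hl]

theorem extendByOne_cProd_of_gt (hk : l < k) :
    extendByOne (hurwitzAct (cProd n l) s) k = extendByOne s k := by
  rw [cProd_eq_ascWord_mul_descWord, hurwitzAct_mul, extendByOne_descWord_of_gt hl _ hk,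
    extendByOne_ascWord_of_gt hl _ hk]

theorem extendByOne_cProd_zero :
    extendByOne (hurwitzAct (cProd n l) s) 0 =
      (coxeterProd (extendByOne s) l)⁻¹ * extendByOne s 0 * coxeterProd (extendByOne s) l := by
  rw [cProd_eq_ascWord_mul_descWord, hurwitzAct_mul, extendByOne_descWord_zero hl,
    extendByOne_ascWord_self hl, coxeterProd]
  group

theorem extendByOne_cProd_succ (hk : k < l) :
    extendByOne (hurwitzAct (cProd n l) s) (k + 1) =
      ((tailProd (extendByOne s) l)⁻¹ * coxeterProd (extendByOne s) l)⁻¹ * extendByOne s (k + 1) *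
        ((tailProd (extendByOne s) l)⁻¹ * coxeterProd (extendByOne s) l) := by
  rw [cProd_eq_ascWord_mul_descWord, hurwitzAct_mul, extendByOne_descWord_succ hl _ hk,
    extendByOne_ascWord_self hl, extendByOne_ascWord_of_lt hl _ hk, coxeterProd,
    mul_assoc _⁻¹ (extendByOne s 0)]

theorem tailProd_cProd :
    tailProd (extendByOne (hurwitzAct (cProd n l) s)) l =
      (coxeterProd (extendByOne s) l)⁻¹ * tailProd (extendByOne s) l *
        coxeterProd (extendByOne s) l := by
  rw [tailProd_eq_conj fun k => extendByOne_cProd_succ hl s]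
  group

theorem coxeterProd_cProd :
    coxeterProd (extendByOne (hurwitzAct (cProd n l) s)) l = coxeterProd (extendByOne s) l := by
  rw [coxeterProd, extendByOne_cProd_zero hl, tailProd_cProd hl, coxeterProd]
  group

theorem extendByOne_cProd_pow_of_gt (hk : l < k) (r : ℕ) :
    extendByOne (hurwitzAct (cProd n l ^ r) s) k = extendByOne s k := by
  induction r with
  | zero => rw [pow_zero, hurwitzAct_one]
  | succ r ih => rw [pow_succ, hurwitzAct_mul, extendByOne_cProd_of_gt hl _ hk, ih]

theorem extendByOne_cProd_pow_zero (r : ℕ) :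
    extendByOne (hurwitzAct (cProd n l ^ r) s) 0 =
      (coxeterProd (extendByOne s) l ^ r)⁻¹ * extendByOne s 0 *
        coxeterProd (extendByOne s) l ^ r := by
  induction r generalizing s with
  | zero => simp [hurwitzAct_one]
  | succ r ih =>
    rw [pow_succ', hurwitzAct_mul, ih, coxeterProd_cProd hl, extendByOne_cProd_zero hl, pow_succ']
    group

theorem extendByOne_cProd_pow_succ (hk : k < l) (r : ℕ) :
    extendByOne (hurwitzAct (cProd n l ^ r) s) (k + 1) =
      ((tailProd (extendByOne s) l ^ r)⁻¹ * coxeterProd (extendByOne s) l ^ r)⁻¹ *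
        extendByOne s (k + 1) *
          ((tailProd (extendByOne s) l ^ r)⁻¹ * coxeterProd (extendByOne s) l ^ r) := by
  induction r generalizing s with
  | zero => simp [hurwitzAct_one]
  | succ r ih =>
    rw [pow_succ', hurwitzAct_mul, ih, coxeterProd_cProd hl, tailProd_cProd hl,
      extendByOne_cProd_succ hl _ hk]
    generalize tailProd (extendByOne s) l = D, coxeterProd (extendByOne s) l = C
    have hconj : (C⁻¹ * D * C) ^ r = C⁻¹ * D ^ r * C := by
      simpa using conj_pow (i := r) (a := C⁻¹) (b := D)
    rw [hconj, pow_succ' D, pow_succ' C]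
    group

end Words

theorem inv_mul_mul_eq_iff_commute {x y : G} : x⁻¹ * y * x = y ↔ Commute x y := by
  rw [mul_assoc, inv_mul_eq_iff_eq_mul, eq_comm]
  rfl

theorem commute_tailProd_pow_of_hurwitzAct_cProd_pow_eq_self {k l N : ℕ} (hl : l < n) (hk : k < l)
    (hC : Commute (coxeterProd (extendByOne s) l ^ N) (extendByOne s (k + 1)))
    (hfix : hurwitzAct (cProd n l ^ N) s = s) :
    Commute (tailProd (extendByOne s) l ^ N) (extendByOne s (k + 1)) := by
  have h := extendByOne_cProd_pow_succ hl s hk N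
  rw [hfix, eq_comm, inv_mul_mul_eq_iff_commute] at h
  simpa using (h.mul_left hC.inv_left).inv_left

theorem hurwitzAct_cProd_pow_eq_self_of_commute {l r : ℕ} (hl : l < n)
    (hC : ∀ k ≤ l, Commute (coxeterProd (extendByOne s) l ^ r) (extendByOne s k))
    (hD : ∀ k < l, Commute (tailProd (extendByOne s) l ^ r) (extendByOne s (k + 1))) :
    hurwitzAct (cProd n l ^ r) s = s := by
  refine extendByOne_injective (funext fun k => ?_)
  rcases lt_or_ge l k with hk | hk
  · exact extendByOne_cProd_pow_of_gt hl s hk r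
  rcases k with _ | k
  · rw [extendByOne_cProd_pow_zero hl]
    exact inv_mul_mul_eq_iff_commute.2 (hC 0 hk)
  · rw [extendByOne_cProd_pow_succ hl s hk]
    exact inv_mul_mul_eq_iff_commute.2 ((hD k hk).inv_left.mul_left (hC _ hk))

theorem hurwitzAct_cWord_prod_pow_eq_self_general {e : ℕ}
    (hroot : ∀ (x y : G) (N : ℕ), N ≠ 0 → Commute (x ^ N) y → Commute (x ^ e) y)
    {j : ℕ} (hj : j ≤ n) (hfin : (hurwitzOrbit s).Finite) {k : ℕ} (hk : k ≠ 0)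
    (hC : ∀ t : Fin j, Commute
      (((List.finRange j).map fun t => s (Fin.castLE hj t)).prod ^ k) (s (Fin.castLE hj t))) :
    hurwitzAct (((List.range (j - 1)).map fun t => cWord n (t + 1)).prod ^ e) s = s := by
  rcases j with _ | l
  · simp [hurwitzAct_one]
  rw [prod_map_castLE_eq_coxeterProd hj] at hC
  obtain ⟨N, hN, hfix⟩ := exists_hurwitzAct_pow_eq_self hfin (cProd n l)
  have hkN : k * N ≠ 0 := mul_ne_zero hk hN
  have hCpow (t : ℕ) (ht : t ≤ l) :
      Commute (coxeterProd (extendByOne s) l ^ (k * N)) (extendByOne s t) := by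
    have h := (hC ⟨t, by omega⟩).pow_left N
    rwa [← pow_mul, ← extendByOne_val s] at h
  have hDpow (t : ℕ) (ht : t < l) :
      Commute (tailProd (extendByOne s) l ^ (k * N)) (extendByOne s (t + 1)) := by
    refine commute_tailProd_pow_of_hurwitzAct_cProd_pow_eq_self hj ht (hCpow _ ht) ?_
    rw [mul_comm, pow_mul]
    exact hurwitzAct_pow_eq_self hfix k
  exact hurwitzAct_cProd_pow_eq_self_of_commute hj
    (fun t ht => hroot _ _ _ hkN (hCpow t ht)) fun t ht => hroot _ _ _ hkN (hDpow t ht)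

end Hurwitz

/-- If the Hurwitz orbit of `s` is finite and the partial Coxeter element
`C = β_1 β_2 ⋯ β_j` is periodic, then `s·(c_1 c_2 ⋯ c_{j-1})^r = s` for some `1 ≤ r ≤ m!`. -/
theorem hurwitzAct_cWord_prod_pow_eq_self {m n : ℕ} (s : Fin n → BraidGroup m) (j : ℕ)
    (h1 : 2 ≤ j) (h2 : j ≤ n)
    (hfin : (hurwitzOrbit s).Finite)
    (hper : IsPeriodic (((List.finRange j).map (fun t => s (Fin.castLE (by omega) t))).prod)) :
    ∃ r : ℕ, 1 ≤ r ∧ r ≤ m.factorial ∧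
      hurwitzAct ((((List.range (j - 1)).map (fun t => cWord n (t + 1))).prod) ^ r) s = s := by
  obtain ⟨k, hk, hcentral⟩ := hper
  exact ⟨m.factorial, m.factorial_pos, le_rfl, hurwitzAct_cWord_prod_pow_eq_self_general
    (fun _ _ _ => BraidGroup.commute_pow_factorial_of_commute_pow) h2 hfin
    (Nat.one_le_iff_ne_zero.1 hk) fun _ => (Subgroup.mem_center_iff.1 hcentral _).symm⟩
end

section
/- Let α ∈ B_3 be a periodic braid of period 3, i.e. α^3 lies in the center of B_3 but α does not. Let β, γ ∈ B_3 and suppose that all three braids βγ, (α^{-1}βα)γ, and (α^{-2}βα^2)γ are periodic. Then β ∈ Z(α) or γ ∈ Z(α), i.e. β or γ commutes with α. -/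
/-!
Modulo its center, `B_3` is the free product of `ℤ/2`, generated by the half twist `Δ`, and `ℤ/3`,
generated by `δ = σ₁ σ₂`, and a braid is periodic exactly when its class has finite order. Every
class is `p w q` with `p, q ∈ ⟨δ⟩` and `w` an alternating word in `Δ` and `δ^{±1}` starting and
ending with `Δ`, unless it lies in `⟨δ⟩`. Cyclic reduction shows that `α` is conjugate into `⟨δ⟩`;
assume it lies there. If neither `β = p w q` nor `γ = r v s` does, then `α⁻ᵏ β αᵏ γ` is conjugate to
`w (q αᵏ r) v (s α⁻ᵏ p)`, and for some `k ∈ {0, 1, 2}` neither bracket is trivial. The result is a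
product of the elements `Δ δ = σ₁⁻¹` and `Δ δ² = σ₂`, so it has infinite order, because these act by
nonnegative unipotent matrices in `SL(2, ℤ)`. Finally, braids whose classes lie in a common cyclic
subgroup commute.
-/

theorem commute_of_mk_mem_zpowers {G : Type*} [Group G] {a b : G} {t : G ⧸ Subgroup.center G}
    (ha : (a : G ⧸ Subgroup.center G) ∈ Subgroup.zpowers t)
    (hb : (b : G ⧸ Subgroup.center G) ∈ Subgroup.zpowers t) : Commute a b := by
  obtain ⟨u, rfl⟩ := QuotientGroup.mk_surjective t
  obtain ⟨i, hi⟩ := ha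
  obtain ⟨j, hj⟩ := hb
  obtain ⟨z, rfl⟩ : ∃ z : Subgroup.center G, a = u ^ i * z :=
    ⟨⟨_, QuotientGroup.eq.1 hi⟩, by simp⟩
  obtain ⟨w, rfl⟩ : ∃ w : Subgroup.center G, b = u ^ j * w :=
    ⟨⟨_, QuotientGroup.eq.1 hj⟩, by simp⟩
  have central (z : Subgroup.center G) (g : G) : Commute (z : G) g :=
    (Subgroup.mem_center_iff.1 z.2 g).symm
  exact (((Commute.refl u).zpow_zpow i j).mul_right (central w _).symm).mul_left (central z _)

theorem eq_or_eq_sq_of_mem_zpowers {G : Type*} [Group G] {y c : G} (hy : y ^ 3 = 1)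
    (hc : c ∈ Subgroup.zpowers y) (hc1 : c ≠ 1) : c = y ∨ c = y ^ 2 := by
  obtain ⟨n, rfl⟩ := hc
  have hmod : y ^ n = y ^ (n % 3) := zpow_eq_zpow_emod' n hy
  have hn : n % 3 = 0 ∨ n % 3 = 1 ∨ n % 3 = 2 := by omega
  rcases hn with hn | hn | hn <;> rw [hn] at hmod
  · exact absurd hmod (by simpa using hc1)
  · exact .inl (by simpa using hmod)
  · exact .inr (by exact_mod_cast hmod)

theorem pow_mem_subsemigroup {M : Type*} [Monoid M] {S : Subsemigroup M} {a : M} (ha : a ∈ S)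
    {n : ℕ} (hn : 1 ≤ n) : a ^ n ∈ S := by
  induction n, hn using Nat.le_induction with
  | base => simpa only [pow_one] using ha
  | succ n _ ih => exact pow_succ a n ▸ mul_mem ih ha

theorem isConj_mul_comm {G : Type*} [Group G] (a b : G) : IsConj (a * b) (b * a) :=
  isConj_iff.2 ⟨b, mul_inv_eq_iff_eq_mul.2 (mul_assoc b a b).symm⟩

section InvolutionSplitting

variable {G : Type*} [Group G] {x a b c d g : G} {C : Subgroup G}

/-- The nontrivial elements of the subgroup `C`, serving as the letters of alternating words. -/
abbrev Syllable (C : Subgroup G) : Type _ := {c : G // c ∈ C ∧ c ≠ 1}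

/-- The value in `G` of the word `x c₁ x c₂ x ⋯ x cₙ x`, which starts and ends with `x`. -/
def alternatingWord (x : G) : List (Syllable C) → G
  | [] => x
  | d :: l => x * d * alternatingWord x l

/-- The subsemigroup of all products `x c₁ x c₂ ⋯ x cₙ` with `n ≥ 1` and every `cᵢ` a nontrivial
element of `C`. -/
def positiveSemigroup (x : G) (C : Subgroup G) : Subsemigroup G :=
  Subsemigroup.closure (Set.range fun d : Syllable C => x * d)

/-- The normal forms of a free product of `{1, x}` and `C`: `g` lies in `C`, or `g = p w q` with
`p, q ∈ C` and `w` an alternating word starting and ending with `x`. -/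
inductive HasNormalForm (x : G) (C : Subgroup G) : G → Prop
  | of_mem {g : G} (hg : g ∈ C) : HasNormalForm x C g
  | of_word {p q : G} (hp : p ∈ C) (l : List (Syllable C)) (hq : q ∈ C) :
      HasNormalForm x C (p * alternatingWord x l * q)

/-- A working substitute for `G` being the internal free product of `{1, x}` and `C`: the two
factors generate, and freeness is replaced by the absence of torsion among the products
`x c₁ x c₂ ⋯ x cₙ`. -/
structure IsInvolutionSplitting (x : G) (C : Subgroup G) : Prop where
  mul_self : x * x = 1
  closure_insert : Subgroup.closure (insert x (C : Set G)) = ⊤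
  not_isOfFinOrder : ∀ t ∈ positiveSemigroup x C, ¬ IsOfFinOrder t

theorem alternatingWord_concat (x : G) (l : List (Syllable C)) (d : Syllable C) :
    alternatingWord x (l ++ [d]) = alternatingWord x l * d * x := by
  induction l with
  | nil => rfl
  | cons e l ih => simp only [List.cons_append, alternatingWord, ih, mul_assoc]

theorem alternatingWord_mul_mem_positiveSemigroup (x : G) (l : List (Syllable C)) (hc : c ∈ C)
    (hc1 : c ≠ 1) : alternatingWord x l * c ∈ positiveSemigroup x C := by
  have syllable_mem (d : Syllable C) : x * d ∈ positiveSemigroup x C :=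
    Subsemigroup.subset_closure ⟨d, rfl⟩
  induction l with
  | nil => exact syllable_mem ⟨c, hc, hc1⟩
  | cons d l ih => simpa only [alternatingWord, mul_assoc] using mul_mem (syllable_mem d) ih

theorem exists_isConj_alternatingWord_mul (hx : x * x = 1) (l : List (Syllable C)) (hc : c ∈ C) :
    ∃ u ∈ ({x} ∪ C ∪ positiveSemigroup x C : Set G), IsConj (alternatingWord x l * c) u := by
  have of_ne_one (l : List (Syllable C)) {c : G} (hc : c ∈ C) (hc1 : c ≠ 1) :
      ∃ u ∈ ({x} ∪ C ∪ positiveSemigroup x C : Set G), IsConj (alternatingWord x l * c) u :=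
    ⟨_, .inr (alternatingWord_mul_mem_positiveSemigroup x l hc hc1), .refl _⟩
  -- Without a final syllable, conjugating by `x` strips both outer letters `x`.
  induction l using List.bidirectionalRec generalizing c with
  | nil =>
    rcases eq_or_ne c 1 with rfl | hc1
    · exact ⟨x, .inl (.inl rfl), by simpa only [alternatingWord, mul_one] using .refl x⟩
    · exact of_ne_one _ hc hc1
  | singleton d =>
    rcases eq_or_ne c 1 with rfl | hc1
    · refine ⟨d, .inl (.inr d.2.1), ?_⟩
      simpa [alternatingWord, mul_assoc, hx] using isConj_mul_comm x (d * x)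
    · exact of_ne_one _ hc hc1
  | cons_append d l e ih =>
    rcases eq_or_ne c 1 with rfl | hc1
    · have strip : IsConj (alternatingWord x (d :: (l ++ [e])) * 1)
          (alternatingWord x l * (e * d)) := by
        have strip_x := isConj_mul_comm x (d * (alternatingWord x l * e * x))
        have rotate := isConj_mul_comm (d : G) (alternatingWord x l * e)
        simp only [mul_assoc, hx, mul_one] at strip_x rotate
        simpa only [alternatingWord, alternatingWord_concat, mul_assoc, mul_one]
          using strip_x.trans rotate
      obtain ⟨u, hu, hconj⟩ := ih (mul_mem e.2.1 d.2.1)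
      exact ⟨u, hu, strip.trans hconj⟩
    · exact of_ne_one _ hc hc1

namespace HasNormalForm

theorem mul_left_of_mem (hd : d ∈ C) (hg : HasNormalForm x C g) : HasNormalForm x C (d * g) := by
  rcases hg with hg | ⟨hp, l, hq⟩
  · exact of_mem (mul_mem hd hg)
  · simpa only [mul_assoc] using of_word (mul_mem hd hp) l hq

theorem involution_mul (hx : x * x = 1) (hg : HasNormalForm x C g) :
    HasNormalForm x C (x * g) := by
  rcases hg with hg | @⟨p, q, hp, l, hq⟩
  · simpa only [alternatingWord, one_mul] using of_word (one_mem C) [] hg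
  rcases eq_or_ne p 1 with rfl | hp1
  · cases l with
    | nil => simpa [alternatingWord, ← mul_assoc, hx] using of_mem hq
    | cons d l => simpa [alternatingWord, ← mul_assoc, hx] using of_word d.2.1 l hq
  · simpa [alternatingWord, mul_assoc] using of_word (one_mem C) (⟨p, hp, hp1⟩ :: l) hq

end HasNormalForm

namespace IsInvolutionSplitting

theorem hasNormalForm (h : IsInvolutionSplitting x C) (g : G) : HasNormalForm x C g := by
  have hg : g ∈ Subgroup.closure (insert x (C : Set G)) := h.closure_insert ▸ Subgroup.mem_top g
  induction hg using Subgroup.closure_induction_left with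
  | one => exact .of_mem (one_mem C)
  | mul_left d hd g _ ih =>
    rcases hd with rfl | hd
    · exact ih.involution_mul h.mul_self
    · exact ih.mul_left_of_mem hd
  | inv_mul_cancel d hd g _ ih =>
    rcases hd with rfl | hd
    · rw [inv_eq_of_mul_eq_one_left h.mul_self]
      exact ih.involution_mul h.mul_self
    · exact ih.mul_left_of_mem (inv_mem hd)

theorem isConj_of_isOfFinOrder (h : IsInvolutionSplitting x C) (hg : IsOfFinOrder g) :
    IsConj g x ∨ ∃ d ∈ C, IsConj g d := by
  rcases h.hasNormalForm g with hgC | @⟨p, q, hp, l, hq⟩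
  · exact .inr ⟨g, hgC, .refl g⟩
  have rotate : IsConj (p * alternatingWord x l * q) (alternatingWord x l * (q * p)) := by
    simpa only [mul_assoc] using isConj_mul_comm p (alternatingWord x l * q)
  obtain ⟨u, hu, hconj⟩ := exists_isConj_alternatingWord_mul h.mul_self l (mul_mem hq hp)
  rcases hu with (rfl | hu) | hu
  · exact .inl (rotate.trans hconj)
  · exact .inr ⟨u, hu, rotate.trans hconj⟩
  · exact absurd ((rotate.trans hconj).isOfFinOrder hg) (h.not_isOfFinOrder u hu)

theorem mem_or_mem_of_isOfFinOrder (h : IsInvolutionSplitting x C) (A : Finset G)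
    (hAC : ∀ a ∈ A, a ∈ C) (hA : 2 < A.card)
    (hfin : ∀ a ∈ A, IsOfFinOrder (a⁻¹ * b * a * c)) : b ∈ C ∨ c ∈ C := by
  classical
  -- For `b = p w q`, `c = r v s` and `a ∈ C`, the element `a⁻¹ b a c` is conjugate to
  -- `w (q a r) v (s a⁻¹ p)`, which is positive unless `a` is one of `q⁻¹ r⁻¹` and `p s`.
  rcases h.hasNormalForm b with hb | @⟨p, q, hp, l, hq⟩
  · exact .inl hb
  rcases h.hasNormalForm c with hc | @⟨r, s, hr, m, hs⟩
  · exact .inr hc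
  obtain ⟨a, haA, ha⟩ : ∃ a ∈ A, a ∉ ({q⁻¹ * r⁻¹, p * s} : Finset G) :=
    Finset.exists_mem_notMem_of_card_lt_card (Finset.card_le_two.trans_lt hA)
  simp only [Finset.mem_insert, Finset.mem_singleton, not_or] at ha
  have haC := hAC a haA
  have middle_ne_one : q * a * r ≠ 1 := fun h1 =>
    ha.1 (by rw [eq_inv_mul_iff_mul_eq, eq_inv_iff_mul_eq_one, h1])
  have last_ne_one : s * a⁻¹ * p ≠ 1 := fun h1 =>
    ha.2 (by
      rwa [mul_assoc, mul_eq_one_iff_inv_eq, eq_inv_mul_iff_mul_eq, mul_inv_eq_iff_eq_mul] at h1)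
  have positive := mul_mem
    (alternatingWord_mul_mem_positiveSemigroup x l (mul_mem (mul_mem hq haC) hr) middle_ne_one)
    (alternatingWord_mul_mem_positiveSemigroup x m (mul_mem (mul_mem hs (inv_mem haC)) hp)
      last_ne_one)
  have rotate : IsConj (a⁻¹ * (p * alternatingWord x l * q) * a * (r * alternatingWord x m * s))
      (alternatingWord x l * (q * a * r) * (alternatingWord x m * (s * a⁻¹ * p))) := by
    simpa only [mul_assoc] using
      isConj_mul_comm (a⁻¹ * p) (alternatingWord x l * q * a * r * alternatingWord x m * s)
  exact absurd (rotate.isOfFinOrder (hfin a haA)) (h.not_isOfFinOrder _ positive)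

theorem exists_conj_mem_of_two_lt_orderOf (h : IsInvolutionSplitting x C) (ha : 2 < orderOf a)
    (hfin : ∀ k < 3, IsOfFinOrder ((a ^ k)⁻¹ * b * a ^ k * c)) :
    ∃ g, g * a * g⁻¹ ∈ C ∧ (g * b * g⁻¹ ∈ C ∨ g * c * g⁻¹ ∈ C) := by
  classical
  have ha_fin : IsOfFinOrder a := orderOf_pos_iff.1 (by omega)
  rcases h.isConj_of_isOfFinOrder ha_fin with hax | ⟨d, hd, had⟩
  · have : a ^ 2 = 1 := isConj_one_left.1 (by simpa [pow_two, h.mul_self] using hax.pow 2)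
    exact absurd (orderOf_le_of_pow_eq_one two_pos this) ha.not_ge
  obtain ⟨g, rfl⟩ := isConj_iff.1 had
  refine ⟨g, hd, ?_⟩
  refine h.mem_or_mem_of_isOfFinOrder ((Finset.range 3).image fun k => (g * a * g⁻¹) ^ k) ?_ ?_ ?_
  · simpa only [Finset.forall_mem_image] using fun k _ => pow_mem hd k
  · rw [Finset.card_image_of_injOn]
    · rw [Finset.card_range]; norm_num
    · intro i hi j hj hij
      simp only [conj_pow, mul_left_inj, mul_right_inj] at hij
      exact pow_injOn_Iio_orderOf ((Finset.mem_range.1 hi).trans_le ha)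
        ((Finset.mem_range.1 hj).trans_le ha) hij
  · simp only [Finset.forall_mem_image, Finset.mem_range]
    intro k hk
    refine IsConj.isOfFinOrder (isConj_iff.2 ⟨g, ?_⟩) (hfin k hk)
    rw [conj_pow]
    group

end IsInvolutionSplitting

end InvolutionSplitting

section PositiveMatrices

open Matrix Matrix.SpecialLinearGroup
open scoped MatrixGroups

/-- The matrices in `SL(2, ℤ)` that have nonnegative entries and a positive diagonal and are not
diagonal. As a subsemigroup without scalar matrices, it detects elements of infinite order modulo
the center. -/
def positiveMatrices : Subsemigroup SL(2, ℤ) where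
  carrier := {M | 1 ≤ M 0 0 ∧ 1 ≤ M 1 1 ∧ 0 ≤ M 0 1 ∧ 0 ≤ M 1 0 ∧ 0 < M 0 1 + M 1 0}
  mul_mem' := by
    rintro M N ⟨hM00, hM11, hM01, hM10, hM⟩ ⟨hN00, hN11, hN01, hN10, hN⟩
    simp only [Set.mem_ofPred_eq, coe_mul, Matrix.mul_apply, Fin.sum_univ_two]
    refine ⟨?_, ?_, ?_, ?_, ?_⟩ <;> nlinarith [mul_nonneg hM01 hN10, mul_nonneg hM10 hN01]

/-- The images of the Artin generators under `burau`. -/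
def burauGen : Fin 2 → SL(2, ℤ) :=
  ![⟨!![1, -1; 0, 1], by simp⟩, ⟨!![1, 0; 1, 1], by simp⟩]

theorem burauGen_relation :
    burauGen 0 * burauGen 1 * burauGen 0 = burauGen 1 * burauGen 0 * burauGen 1 := by
  decide

theorem inv_burauGen_zero_mem_positiveMatrices : (burauGen 0)⁻¹ ∈ positiveMatrices := by
  refine ⟨?_, ?_, ?_, ?_, ?_⟩ <;> decide

theorem burauGen_one_mem_positiveMatrices : burauGen 1 ∈ positiveMatrices := by
  refine ⟨?_, ?_, ?_, ?_, ?_⟩ <;> decide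

theorem notMem_positiveMatrices_of_commute {M : SL(2, ℤ)} (h₀ : Commute (burauGen 0) M)
    (h₁ : Commute (burauGen 1) M) : M ∉ positiveMatrices := by
  rintro ⟨-, -, -, -, hM⟩
  have corner_eq {N : SL(2, ℤ)} (h : Commute N M) : (N * M) 0 0 = (M * N) 0 0 := by rw [h.eq]
  simp only [coe_mul, Matrix.mul_apply, Fin.sum_univ_two] at corner_eq
  have h10 : M 1 0 = 0 := by simpa [burauGen] using corner_eq h₀
  have h01 : M 0 1 = 0 := by simpa [burauGen] using corner_eq h₁
  omega

end PositiveMatrices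

/-- The braid group modulo its center; for `m = 3` this is the modular group `ℤ/2 * ℤ/3`. -/
abbrev BraidCenterQuotient (m : ℕ) : Type := BraidGroup m ⧸ Subgroup.center (BraidGroup m)

theorem isPeriodic_iff_isOfFinOrder_mk {m : ℕ} {β : BraidGroup m} :
    IsPeriodic β ↔ IsOfFinOrder (β : BraidCenterQuotient m) := by
  simp only [IsPeriodic, isOfFinOrder_iff_pow_eq_one, ← QuotientGroup.mk_pow,
    QuotientGroup.eq_one_iff, Nat.lt_iff_add_one_le, zero_add]

section ThreeStrands

open scoped MatrixGroups

local notation "σ₁" => braidGen 3 1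
local notation "σ₂" => braidGen 3 2

theorem braidGen_three_relation : σ₁ * σ₂ * σ₁ = σ₂ * σ₁ * σ₂ :=
  PresentedGroup.mk_eq_mk_of_mul_inv_mem (.inr ⟨0, 1, by simp, rfl⟩)

theorem subgroup_eq_top_of_braidGen_mem {H : Subgroup (BraidGroup 3)} (h₁ : σ₁ ∈ H)
    (h₂ : σ₂ ∈ H) : H = ⊤ := by
  refine (Subgroup.eq_top_iff' H).2 (PresentedGroup.generated_by _ H fun i => ?_)
  match i with
  | 0 => exact h₁
  | 1 => exact h₂

theorem mem_center_of_commute_braidGen {z : BraidGroup 3} (h₁ : Commute σ₁ z) (h₂ : Commute σ₂ z) :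
    z ∈ Subgroup.center (BraidGroup 3) := by
  have : Subgroup.centralizer {z} = ⊤ := subgroup_eq_top_of_braidGen_mem
    (Subgroup.mem_centralizer_singleton_iff.2 h₁) (Subgroup.mem_centralizer_singleton_iff.2 h₂)
  simpa using this

/-- The Garside element `Δ` of `B_3`, a half twist of all three strands. -/
def halfTwist : BraidGroup 3 := σ₁ * σ₂ * σ₁

/-- The rotation `δ` of `B_3`, a third of the full twist `Δ² = δ³`. -/
def thirdTwist : BraidGroup 3 := σ₁ * σ₂

theorem halfTwist_mul_self : halfTwist * halfTwist = thirdTwist ^ 3 := by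
  rw [halfTwist, thirdTwist]
  nth_rw 2 [braidGen_three_relation]
  simp only [pow_succ, pow_zero, one_mul, mul_assoc]

theorem thirdTwist_pow_three_mem_center : thirdTwist ^ 3 ∈ Subgroup.center (BraidGroup 3) := by
  have semiconj₁ : SemiconjBy halfTwist σ₁ σ₂ := by
    rw [SemiconjBy, halfTwist]
    nth_rw 1 [braidGen_three_relation]
    simp only [mul_assoc]
  have semiconj₂ : SemiconjBy halfTwist σ₂ σ₁ := by
    rw [SemiconjBy, halfTwist]
    nth_rw 2 [braidGen_three_relation]
    simp only [mul_assoc]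
  rw [← halfTwist_mul_self]
  exact mem_center_of_commute_braidGen (semiconj₂.mul_left semiconj₁).symm
    (semiconj₁.mul_left semiconj₂).symm

theorem mk_thirdTwist_pow_three : (thirdTwist : BraidCenterQuotient 3) ^ 3 = 1 :=
  (QuotientGroup.eq_one_iff _).2 thirdTwist_pow_three_mem_center

theorem mk_halfTwist_mul_self : (halfTwist * halfTwist : BraidCenterQuotient 3) = 1 := by
  rw [← QuotientGroup.mk_mul, halfTwist_mul_self, QuotientGroup.mk_pow, mk_thirdTwist_pow_three]

theorem mk_halfTwist_mul_thirdTwist :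
    (halfTwist * thirdTwist : BraidCenterQuotient 3) = (σ₁⁻¹ : BraidGroup 3) := by
  have h : halfTwist * thirdTwist = halfTwist * halfTwist * σ₁⁻¹ := by
    simp only [halfTwist, thirdTwist, mul_assoc, mul_inv_cancel, mul_one]
  rw [← QuotientGroup.mk_mul, h, QuotientGroup.mk_mul, QuotientGroup.mk_mul,
    mk_halfTwist_mul_self, one_mul]

theorem mk_halfTwist_mul_thirdTwist_sq :
    (halfTwist * thirdTwist ^ 2 : BraidCenterQuotient 3) = (σ₂ : BraidGroup 3) := by
  rw [pow_two, ← mul_assoc, mk_halfTwist_mul_thirdTwist, ← QuotientGroup.mk_mul, thirdTwist,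
    inv_mul_cancel_left]

theorem closure_insert_halfTwist_zpowers :
    Subgroup.closure (insert halfTwist (Subgroup.zpowers thirdTwist : Set (BraidGroup 3))) = ⊤ := by
  set H := Subgroup.closure (insert halfTwist (Subgroup.zpowers thirdTwist : Set (BraidGroup 3)))
  have hΔ : halfTwist ∈ H := Subgroup.subset_closure (.inl rfl)
  have hδ : thirdTwist ∈ H := Subgroup.subset_closure (.inr (Subgroup.mem_zpowers thirdTwist))
  have hσ₁ : σ₁ ∈ H := (Subgroup.mul_mem_cancel_left H hδ).1 hΔ
  exact subgroup_eq_top_of_braidGen_mem hσ₁ ((Subgroup.mul_mem_cancel_left H hσ₁).1 hδ)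

/-- The reduced Burau representation of `B_3` at `t = -1`, in a basis chosen so that `σ₁⁻¹` and `σ₂`
have nonnegative matrices. -/
def burau : BraidGroup 3 →* SL(2, ℤ) :=
  PresentedGroup.toGroup (f := burauGen) <| by
    rintro r (⟨i, j, hij, rfl⟩ | ⟨i, j, hij, rfl⟩)
    · omega
    · rw [map_mul, map_inv, mul_inv_eq_one]
      match i, j with
      | 0, 1 => simpa using burauGen_relation
      | 1, 0 => simpa using burauGen_relation.symm

theorem notMem_center_of_burau_mem_positiveMatrices {g : BraidGroup 3}
    (hg : burau g ∈ positiveMatrices) : g ∉ Subgroup.center (BraidGroup 3) := by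
  intro hc
  have commute_burau (i : Fin 2) : Commute (burauGen i) (burau g) := by
    have h : Commute (PresentedGroup.of i) g := Subgroup.mem_center_iff.1 hc _
    simpa only [burau, PresentedGroup.toGroup.of] using h.map burau
  exact notMem_positiveMatrices_of_commute (commute_burau 0) (commute_burau 1) hg

theorem not_isOfFinOrder_mk_of_burau_mem_positiveMatrices {g : BraidGroup 3}
    (hg : burau g ∈ positiveMatrices) :
    ¬ IsOfFinOrder (g : BraidCenterQuotient 3) := by
  rw [← isPeriodic_iff_isOfFinOrder_mk]
  rintro ⟨k, hk, hc⟩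
  refine notMem_center_of_burau_mem_positiveMatrices ?_ hc
  exact map_pow burau g k ▸ pow_mem_subsemigroup hg hk

theorem positiveSemigroup_le_map_positiveMatrices :
    positiveSemigroup (halfTwist : BraidCenterQuotient 3) (Subgroup.zpowers thirdTwist) ≤
      (positiveMatrices.comap (burau : BraidGroup 3 →ₙ* SL(2, ℤ))).map
        (QuotientGroup.mk' (Subgroup.center (BraidGroup 3)) :
          BraidGroup 3 →ₙ* BraidCenterQuotient 3) := by
  refine Subsemigroup.closure_le.2 ?_
  rintro _ ⟨⟨c, hc, hc1⟩, rfl⟩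
  rcases eq_or_eq_sq_of_mem_zpowers mk_thirdTwist_pow_three hc hc1 with rfl | rfl
  · exact ⟨σ₁⁻¹, inv_burauGen_zero_mem_positiveMatrices, mk_halfTwist_mul_thirdTwist.symm⟩
  · exact ⟨σ₂, burauGen_one_mem_positiveMatrices, mk_halfTwist_mul_thirdTwist_sq.symm⟩

theorem isInvolutionSplitting_halfTwist :
    IsInvolutionSplitting (halfTwist : BraidCenterQuotient 3) (Subgroup.zpowers thirdTwist) where
  mul_self := mk_halfTwist_mul_self
  closure_insert := by
    have h := congrArg (Subgroup.map (QuotientGroup.mk' (Subgroup.center (BraidGroup 3))))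
      closure_insert_halfTwist_zpowers
    rw [MonoidHom.map_closure, Set.image_insert_eq, ← Subgroup.coe_map, MonoidHom.map_zpowers,
      Subgroup.map_top_of_surjective _ (QuotientGroup.mk'_surjective _)] at h
    exact h
  not_isOfFinOrder := by
    intro t ht
    obtain ⟨g, hg, rfl⟩ := positiveSemigroup_le_map_positiveMatrices ht
    exact not_isOfFinOrder_mk_of_burau_mem_positiveMatrices hg

end ThreeStrands

/-- If `α ∈ B_3` is periodic of period 3 (`α^3` central, `α` not central)
and all of `βγ`, `(α⁻¹βα)γ`, `(α⁻²βα²)γ` are periodic, then `β` or `γ` commutes with `α`. -/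
theorem key_lemma_period_three (α β γ : BraidGroup 3)
    (h3 : α ^ 3 ∈ Subgroup.center (BraidGroup 3))
    (h1 : α ∉ Subgroup.center (BraidGroup 3))
    (hp1 : IsPeriodic (β * γ))
    (hp2 : IsPeriodic ((α⁻¹ * β * α) * γ))
    (hp3 : IsPeriodic (((α ^ 2)⁻¹ * β * α ^ 2) * γ)) :
    Commute β α ∨ Commute γ α := by
  have orderOf_eq : orderOf (α : BraidCenterQuotient 3) = 3 := by
    refine orderOf_eq_prime ?_ (mt (QuotientGroup.eq_one_iff α).1 h1)
    rwa [← QuotientGroup.mk_pow, QuotientGroup.eq_one_iff]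
  have conj_periodic : ∀ k < 3, IsPeriodic ((α ^ k)⁻¹ * β * α ^ k * γ) := by
    intro k hk
    interval_cases k
    · simpa using hp1
    · simpa using hp2
    · exact hp3
  have conj_isOfFinOrder : ∀ k < 3,
      IsOfFinOrder ((α ^ k)⁻¹ * β * α ^ k * γ : BraidCenterQuotient 3) :=
    fun k hk => isPeriodic_iff_isOfFinOrder_mk.1 (conj_periodic k hk)
  obtain ⟨t, hα, hβγ⟩ := isInvolutionSplitting_halfTwist.exists_conj_mem_of_two_lt_orderOf
    (by omega) conj_isOfFinOrder
  obtain ⟨g, rfl⟩ := QuotientGroup.mk_surjective t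
  exact hβγ.imp (fun hβ => (Commute.conj_iff g).1 (commute_of_mk_mem_zpowers hβ hα))
    fun hγ => (Commute.conj_iff g).1 (commute_of_mk_mem_zpowers hγ hα)
end
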